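/- arXiv:1603.07876 — 5 statements merged into one kernel-verified Lean document; each statement's English description precedes it below -/
import Mathlib

section
/- Let k be a field and C a k-linear abelian category, and let A be an object of C with Hom(A,A) and Ext^2(A,A) one-dimensional over k and Ext^i(A,A) = 0 for all i ≥ 1 with i ≠ 2. Then the full subcategory of D^b(C) consisting of objects B with H^i(B) ≅ A^{d_i} for some d_i ∈ ℕ (all i ∈ ℤ, with d_i = 0 for all but finitely many i) has only countably many isomorphism classes: there exists a sequence (B_m)_{m∈ℕ} of objects of D^b(C) such that every such B is isomorphic to B_m for some m. (Proposition 3.6, countability part.) -/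
open CategoryTheory Limits

attribute [local instance] CategoryTheory.Abelian.hasFiniteBiproducts

namespace ThreeCusps

variable (k : Type*) [Field k]
variable {C : Type*} [Category C] [Abelian C] [CategoryTheory.Linear k C]
  [HasDerivedCategory C]

/-- `Hom(A[0], Y)` is one-dimensional over `k`:  it is spanned by a nonzero element `e`,
where the `k`-action on `Hom((single A), Y)` is induced by precomposition with the scalar
endomorphisms `c • 𝟙 A` of `A` (this is the `k`-linear structure of the derived category
of the `k`-linear category `C`). -/
def HomIsLine (A : C) (Y : DerivedCategory C) : Prop :=
  ∃ e : (DerivedCategory.singleFunctor C 0).obj A ⟶ Y, e ≠ 0 ∧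
    ∀ φ : (DerivedCategory.singleFunctor C 0).obj A ⟶ Y,
      ∃ c : k, φ = (DerivedCategory.singleFunctor C 0).map (c • 𝟙 A) ≫ e

/-- The hypotheses (3.3) on the object `A` of the `k`-linear abelian category `C`:
`Hom(A,A)` and `Ext²(A,A)` are one-dimensional over `k` and `Extⁱ(A,A) = 0` for every
`i ≥ 1` with `i ≠ 2`, where `Extⁱ(A,A) = Hom_{D(C)}(A, A[i])`. -/
def GoodBase (A : C) : Prop :=
  Module.finrank k (A ⟶ A) = 1 ∧
  HomIsLine k A (((DerivedCategory.singleFunctor C 0).obj A)⟦(2 : ℤ)⟧) ∧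
  ∀ i : ℕ, 1 ≤ i → i ≠ 2 →
    ∀ φ : (DerivedCategory.singleFunctor C 0).obj A ⟶
        ((DerivedCategory.singleFunctor C 0).obj A)⟦(i : ℤ)⟧, φ = 0

/-- `X` is an object of type `Aₙ` of the (bounded) derived category of `C`:
`Hⁱ(X) ≅ A` for `0 ≤ i ≤ n`, `Hⁱ(X) = 0` otherwise, and `Hom_{D(C)}(A, X[j])` is
one-dimensional over `k` for `j ∈ {0, n+2}` and vanishes for every other `j ∈ ℤ`. -/
def IsTypeA (A : C) (n : ℕ) (X : DerivedCategory C) : Prop :=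
  (∀ i : ℤ, 0 ≤ i → i ≤ (n : ℤ) →
    Nonempty ((DerivedCategory.homologyFunctor C i).obj X ≅ A)) ∧
  (∀ i : ℤ, (i < 0 ∨ (n : ℤ) < i) →
    IsZero ((DerivedCategory.homologyFunctor C i).obj X)) ∧
  (∀ j : ℤ, (j = 0 ∨ j = (n : ℤ) + 2) → HomIsLine k A (X⟦j⟧)) ∧
  (∀ j : ℤ, j ≠ 0 → j ≠ (n : ℤ) + 2 →
    ∀ φ : (DerivedCategory.singleFunctor C 0).obj A ⟶ X⟦j⟧, φ = 0)

set_option linter.unusedSectionVars false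
set_option linter.unusedSimpArgs false

noncomputable section Aux

open Pretriangulated Module

theorem flag_ext {k : Type*} [Field k] {E E' : Type*} [AddCommGroup E] [Module k E]
    [AddCommGroup E'] [Module k E'] [FiniteDimensional k E] [FiniteDimensional k E']
    (F : ℕ → Submodule k E) (F' : ℕ → Submodule k E') (hF : Monotone F) (hF' : Monotone F')
    (h0 : F 0 = ⊥) (h0' : F' 0 = ⊥) (N : ℕ) (hN : F N = ⊤) (hN' : F' N = ⊤)
    (hd : ∀ j, finrank k (F j) = finrank k (F' j))
    {U : Type*} [AddCommGroup U] [Module k U] [FiniteDimensional k U]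
    (a : U →ₗ[k] E) (a' : U →ₗ[k] E')
    (haa : ∀ u j, a u ∈ F j ↔ a' u ∈ F' j) :
    ∃ e : E ≃ₗ[k] E', (∀ u, e (a u) = a' u) ∧ ∀ v j, v ∈ F j ↔ e v ∈ F' j := by
  have key : ∀ n : ℕ, ∃ R : Submodule k (E × E'),
      (∀ u, (a u, a' u) ∈ R) ∧ (∀ x ∈ R, ∀ j, x.1 ∈ F j ↔ x.2 ∈ F' j) ∧
      (∀ v, v ∈ F n → ∃ w, (v, w) ∈ R) ∧ (∀ w, w ∈ F' n → ∃ v, (v, w) ∈ R) := by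
    intro n
    induction n with
    | zero =>
      refine ⟨LinearMap.range (a.prod a'), fun u => ⟨u, rfl⟩, ?_, ?_, ?_⟩
      · rintro _ ⟨u, rfl⟩ j
        exact haa u j
      · intro v hv
        rw [h0, Submodule.mem_bot] at hv
        exact ⟨0, by rw [hv]; exact Submodule.zero_mem _⟩
      · intro v hv
        rw [h0', Submodule.mem_bot] at hv
        exact ⟨0, by rw [hv]; exact Submodule.zero_mem _⟩
    | succ n ih =>
      obtain ⟨R, hR1, hR2, hR3, hR4⟩ := ih
      let G : Submodule k (E × E') := R ⊓ (F (n+1)).comap (LinearMap.fst k E E')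
      have hG : G = R ⊓ (F' (n+1)).comap (LinearMap.snd k E E') := by
        ext x
        simp only [G, Submodule.mem_inf, Submodule.mem_comap, LinearMap.fst_apply,
          LinearMap.snd_apply]
        exact ⟨fun h => ⟨h.1, (hR2 x h.1 _).1 h.2⟩, fun h => ⟨h.1, (hR2 x h.1 _).2 h.2⟩⟩
      let W := G.map (LinearMap.fst k E E')
      let W' := G.map (LinearMap.snd k E E')
      have z1 : ∀ x ∈ R, x.1 = 0 → x = 0 := by
        intro x hx h
        have := (hR2 x hx 0).1 (by rw [h]; exact Submodule.zero_mem _)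
        rw [h0', Submodule.mem_bot] at this
        exact Prod.ext h this
      have z2 : ∀ x ∈ R, x.2 = 0 → x = 0 := by
        intro x hx h
        have := (hR2 x hx 0).2 (by rw [h]; exact Submodule.zero_mem _)
        rw [h0, Submodule.mem_bot] at this
        exact Prod.ext this h
      have d1 : finrank k W = finrank k G := by
        have hinj : Function.Injective ((LinearMap.fst k E E').domRestrict G) := by
          rw [← LinearMap.ker_eq_bot, LinearMap.ker_eq_bot']
          intro m hm
          exact Subtype.ext (z1 m.1 m.2.1 hm)
        rw [← LinearMap.finrank_range_of_inj hinj, LinearMap.range_domRestrict]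
      have d2 : finrank k W' = finrank k G := by
        have hinj : Function.Injective ((LinearMap.snd k E E').domRestrict G) := by
          rw [← LinearMap.ker_eq_bot, LinearMap.ker_eq_bot']
          intro m hm
          exact Subtype.ext (z2 m.1 m.2.1 hm)
        rw [← LinearMap.finrank_range_of_inj hinj, LinearMap.range_domRestrict]
      have hW : W ≤ F (n+1) := by
        rintro _ ⟨x, hx, rfl⟩
        exact hx.2
      have hW' : W' ≤ F' (n+1) := by
        rintro _ ⟨x, hx, rfl⟩
        rw [hG] at hx
        exact hx.2
      have comp : ∀ {M : Type _} [AddCommGroup M] [Module k M] [FiniteDimensional k M]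
          (A B : Submodule k M), A ≤ B → ∃ Q : Submodule k M, Q ≤ B ∧ A ⊓ Q = ⊥ ∧ A ⊔ Q = B ∧
            finrank k A + finrank k Q = finrank k B := by
        intro M _ _ _ A B hAB
        obtain ⟨Q, hQ⟩ := Submodule.exists_isCompl A
        have e1 : A ⊔ Q ⊓ B = B := by
          rw [← sup_inf_assoc_of_le Q hAB, hQ.sup_eq_top, top_inf_eq]
        have e2 : A ⊓ (Q ⊓ B) = ⊥ := by
          rw [← inf_assoc, hQ.inf_eq_bot, bot_inf_eq]
        refine ⟨Q ⊓ B, inf_le_right, e2, e1, ?_⟩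
        have := Submodule.finrank_sup_add_finrank_inf_eq A (Q ⊓ B)
        rw [e1, e2, finrank_bot] at this
        omega
      have comp' : ∀ (A B : Submodule k E'), A ≤ B → ∃ Q : Submodule k E', Q ≤ B ∧ A ⊓ Q = ⊥ ∧
          A ⊔ Q = B ∧ finrank k A + finrank k Q = finrank k B := by
        intro A B hAB
        obtain ⟨Q, hQ⟩ := Submodule.exists_isCompl A
        have e1 : A ⊔ Q ⊓ B = B := by
          rw [← sup_inf_assoc_of_le Q hAB, hQ.sup_eq_top, top_inf_eq]
        have e2 : A ⊓ (Q ⊓ B) = ⊥ := by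
          rw [← inf_assoc, hQ.inf_eq_bot, bot_inf_eq]
        refine ⟨Q ⊓ B, inf_le_right, e2, e1, ?_⟩
        have := Submodule.finrank_sup_add_finrank_inf_eq A (Q ⊓ B)
        rw [e1, e2, finrank_bot] at this
        omega
      obtain ⟨Q, hQ1, hQ2, hQ3, hQ4⟩ := comp W _ hW
      obtain ⟨Q', hQ1', hQ2', hQ3', hQ4'⟩ := comp' W' _ hW'
      have hdim : finrank k Q = finrank k Q' := by
        have := hd (n+1)
        omega
      let q : Q ≃ₗ[k] Q' := LinearEquiv.ofFinrankEq _ _ hdim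
      let S : Submodule k (E × E') := LinearMap.range (Q.subtype.prod (Q'.subtype ∘ₗ q.toLinearMap))
      refine ⟨R ⊔ S, fun u => Submodule.mem_sup_left (hR1 u), ?_, ?_, ?_⟩
      · intro x hx j
        obtain ⟨y, hy, z, ⟨s, rfl⟩, rfl⟩ := Submodule.mem_sup.1 hx
        have e1 : (y + (Q.subtype.prod (Q'.subtype ∘ₗ q.toLinearMap)) s).1 = y.1 + s.1 := rfl
        have e2 : (y + (Q.subtype.prod (Q'.subtype ∘ₗ q.toLinearMap)) s).2 = y.2 + (q s).1 := rfl
        rw [e1, e2]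
        rcases le_or_gt (n+1) j with hj | hj
        · rw [Submodule.add_mem_iff_left _ (hF hj (hQ1 s.2)),
            Submodule.add_mem_iff_left _ (hF' hj (hQ1' (q s).2))]
          exact hR2 y hy j
        · have hj' : j ≤ n := by omega
          constructor
          · intro h
            obtain ⟨w, hw⟩ := hR3 _ (hF hj' h)
            have hs : s.1 ∈ W := by
              refine ⟨(y.1 + s.1, w) - y, ⟨R.sub_mem hw hy, ?_⟩, ?_⟩
              · simpa using hQ1 s.2
              · simp
            have hs0 : s.1 ∈ W ⊓ Q := ⟨hs, s.2⟩
            rw [hQ2, Submodule.mem_bot] at hs0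
            have hs1 : s = 0 := Subtype.ext hs0
            subst hs1
            simpa using (hR2 y hy j).1 (by simpa using h)
          · intro h
            obtain ⟨w, hw⟩ := hR4 _ (hF' hj' h)
            have hs : (q s).1 ∈ W' := by
              refine ⟨(w, y.2 + (q s).1) - y, ?_, ?_⟩
              · rw [hG]
                refine ⟨R.sub_mem hw hy, ?_⟩
                simpa using hQ1' (q s).2
              · simp
            have hs0 : (q s).1 ∈ W' ⊓ Q' := ⟨hs, (q s).2⟩
            rw [hQ2', Submodule.mem_bot] at hs0
            have hs1 : q s = 0 := Subtype.ext hs0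
            have hs2 : s = 0 := by simpa using hs1
            subst hs2
            simpa using (hR2 y hy j).2 (by simpa using h)
      · intro v hv
        rw [← hQ3] at hv
        obtain ⟨_, ⟨x, hx, rfl⟩, s, hs, rfl⟩ := Submodule.mem_sup.1 hv
        exact ⟨x.2 + (q ⟨s, hs⟩).1, Submodule.mem_sup.2 ⟨x, hx.1, (s, (q ⟨s, hs⟩).1),
          ⟨⟨s, hs⟩, rfl⟩, rfl⟩⟩
      · intro v hv
        rw [← hQ3'] at hv
        obtain ⟨_, ⟨x, hx, rfl⟩, s, hs, rfl⟩ := Submodule.mem_sup.1 hv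
        refine ⟨x.1 + (q.symm ⟨s, hs⟩).1, Submodule.mem_sup.2 ⟨x, hx.1, ((q.symm ⟨s, hs⟩).1, s),
          ⟨q.symm ⟨s, hs⟩, ?_⟩, rfl⟩⟩
        ext <;> simp
  obtain ⟨R, hR1, hR2, hR3, hR4⟩ := key N
  have b1 : Function.Bijective ((LinearMap.fst k E E').domRestrict R) := by
    constructor
    · rw [← LinearMap.ker_eq_bot, LinearMap.ker_eq_bot']
      intro m hm
      have h : m.1.1 = 0 := hm
      have := (hR2 m.1 m.2 0).1 (by rw [h]; exact Submodule.zero_mem _)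
      rw [h0', Submodule.mem_bot] at this
      exact Subtype.ext (Prod.ext h this)
    · intro v
      obtain ⟨w, hw⟩ := hR3 v (by rw [hN]; trivial)
      exact ⟨⟨_, hw⟩, rfl⟩
  have b2 : Function.Bijective ((LinearMap.snd k E E').domRestrict R) := by
    constructor
    · rw [← LinearMap.ker_eq_bot, LinearMap.ker_eq_bot']
      intro m hm
      have h : m.1.2 = 0 := hm
      have := (hR2 m.1 m.2 0).2 (by rw [h]; exact Submodule.zero_mem _)
      rw [h0, Submodule.mem_bot] at this
      exact Subtype.ext (Prod.ext this h)
    · intro v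
      obtain ⟨w, hw⟩ := hR4 v (by rw [hN']; trivial)
      exact ⟨⟨_, hw⟩, rfl⟩
  let e1 := LinearEquiv.ofBijective _ b1
  let e2 := LinearEquiv.ofBijective _ b2
  have hev : ∀ x : R, (e1.symm.trans e2) x.1.1 = x.1.2 := by
    intro x
    have : e1.symm x.1.1 = x := by
      rw [LinearEquiv.symm_apply_eq]; rfl
    rw [LinearEquiv.trans_apply, this]
    rfl
  refine ⟨e1.symm.trans e2, fun u => hev ⟨_, hR1 u⟩, fun v j => ?_⟩
  obtain ⟨x, rfl⟩ := e1.surjective v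
  have : e1 x = x.1.1 := rfl
  rw [this, hev]
  exact hR2 _ x.2 j


/-- the functor of complexes concentrated in degree zero on finite powers of `A`. -/
abbrev PP (A : C) (d : ℕ) : DerivedCategory C :=
  (DerivedCategory.singleFunctor C 0).obj (⨁ (fun _ : Fin d => A))

variable {k}

/-- the morphism between powers of `A` given by a linear map. -/
def rmap (A : C) {d d' : ℕ} (f : (Fin d → k) →ₗ[k] (Fin d' → k)) :
    (⨁ (fun _ : Fin d => A)) ⟶ (⨁ (fun _ : Fin d' => A)) :=
  biproduct.matrix (fun i j => f (Pi.single i 1) j • 𝟙 A)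

lemma rmap_comp (A : C) {d d' d'' : ℕ} (f : (Fin d → k) →ₗ[k] (Fin d' → k))
    (g : (Fin d' → k) →ₗ[k] (Fin d'' → k)) :
    rmap A f ≫ rmap A g = rmap A (g ∘ₗ f) := by
  ext j i
  have hf : f (Pi.single i 1) = ∑ l, f (Pi.single i 1) l • Pi.single l (1 : k) := by
    simpa using (pi_eq_sum_univ' (f (Pi.single i 1)))
  have h2 : (g ∘ₗ f) (Pi.single i 1) j
      = ∑ l, f (Pi.single i 1) l * g (Pi.single l 1) j := by
    rw [LinearMap.comp_apply]
    conv_lhs => rw [hf]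
    rw [map_sum]
    simp
  simp only [rmap, Category.assoc, biproduct.matrix_π, biproduct.ι_desc, h2]
  rw [← Category.assoc, biproduct.ι_matrix]
  rw [biproduct.lift_desc]
  simp only [Linear.smul_comp, Linear.comp_smul, Category.comp_id, smul_smul, Finset.sum_smul, mul_comm]

lemma rmap_id (A : C) (d : ℕ) :
    rmap A (LinearMap.id : (Fin d → k) →ₗ[k] (Fin d → k)) = 𝟙 _ := by
  ext j i
  simp only [rmap, biproduct.matrix_π, biproduct.ι_desc, LinearMap.id_apply, Category.id_comp,
    Category.comp_id]
  rw [biproduct.ι_π]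
  by_cases h : i = j
  · subst h; simp
  · simp [h, Pi.single_apply, Ne.symm h, eq_comm]

/-- isomorphism between powers of `A` given by a linear equivalence. -/
def riso (A : C) {d d' : ℕ} (g : (Fin d → k) ≃ₗ[k] (Fin d' → k)) :
    (⨁ (fun _ : Fin d => A)) ≅ (⨁ (fun _ : Fin d' => A)) where
  hom := rmap A g.toLinearMap
  inv := rmap A g.symm.toLinearMap
  hom_inv_id := by rw [rmap_comp]; simp [rmap_id]
  inv_hom_id := by rw [rmap_comp]; simp [rmap_id]

lemma PP_total (A : C) (d : ℕ) :
    (∑ i : Fin d, (DerivedCategory.singleFunctor C 0).map (biproduct.π (fun _ : Fin d => A) i) ≫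
      (DerivedCategory.singleFunctor C 0).map (biproduct.ι (fun _ : Fin d => A) i))
      = 𝟙 (PP A d) := by
  simp only [← Functor.map_comp, ← Functor.map_sum, biproduct.total, CategoryTheory.Functor.map_id]

lemma PP_hom_ext (A : C) {d d' : ℕ} (n : ℤ) (f g : PP A d ⟶ (PP A d')⟦n⟧)
    (h : ∀ i j, (DerivedCategory.singleFunctor C 0).map (biproduct.ι (fun _ : Fin d => A) i) ≫ f ≫
        ((DerivedCategory.singleFunctor C 0).map (biproduct.π (fun _ : Fin d' => A) j))⟦n⟧' =
      (DerivedCategory.singleFunctor C 0).map (biproduct.ι (fun _ : Fin d => A) i) ≫ g ≫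
        ((DerivedCategory.singleFunctor C 0).map (biproduct.π (fun _ : Fin d' => A) j))⟦n⟧') :
    f = g := by
  rw [← Category.id_comp f, ← Category.id_comp g, ← PP_total, Preadditive.sum_comp,
    Preadditive.sum_comp]
  refine Finset.sum_congr rfl fun i _ => ?_
  rw [Category.assoc, Category.assoc]
  congr 1
  have t : (∑ j : Fin d', ((DerivedCategory.singleFunctor C 0).map
        (biproduct.π (fun _ : Fin d' => A) j))⟦n⟧' ≫
      ((DerivedCategory.singleFunctor C 0).map (biproduct.ι (fun _ : Fin d' => A) j))⟦n⟧')
      = 𝟙 ((PP A d')⟦n⟧) := by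
    simp only [← Functor.map_comp, ← Functor.map_sum, biproduct.total, CategoryTheory.Functor.map_id]
  rw [← Category.comp_id f, ← Category.comp_id g, ← t, Preadditive.comp_sum,
    Preadditive.comp_sum, Preadditive.comp_sum, Preadditive.comp_sum]
  refine Finset.sum_congr rfl fun j _ => ?_
  have := h i j =≫ ((DerivedCategory.singleFunctor C 0).map
    (biproduct.ι (fun _ : Fin d' => A) j))⟦n⟧'
  simpa only [Category.assoc] using this

/-- the diagonal morphism `A^d ⟶ A^d[2]`. -/
def EE (A : C) (e : (DerivedCategory.singleFunctor C 0).obj A ⟶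
    ((DerivedCategory.singleFunctor C 0).obj A)⟦(2 : ℤ)⟧) (d : ℕ) : PP A d ⟶ (PP A d)⟦(2 : ℤ)⟧ :=
  ∑ i : Fin d, (DerivedCategory.singleFunctor C 0).map (biproduct.π (fun _ : Fin d => A) i) ≫ e ≫
    ((DerivedCategory.singleFunctor C 0).map (biproduct.ι (fun _ : Fin d => A) i))⟦(2 : ℤ)⟧'

section
variable (A : C) (e : (DerivedCategory.singleFunctor C 0).obj A ⟶
    ((DerivedCategory.singleFunctor C 0).obj A)⟦(2 : ℤ)⟧)

lemma EE_π (d : ℕ) (j : Fin d) : EE A e d ≫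
    ((DerivedCategory.singleFunctor C 0).map (biproduct.π (fun _ : Fin d => A) j))⟦(2 : ℤ)⟧' =
    (DerivedCategory.singleFunctor C 0).map (biproduct.π (fun _ : Fin d => A) j) ≫ e := by
  rw [EE, Preadditive.sum_comp, Finset.sum_eq_single j]
  · simp only [Category.assoc, ← Functor.map_comp, biproduct.ι_π_self, CategoryTheory.Functor.map_id,
      Category.comp_id]
  · intro b _ hb
    simp only [Category.assoc, ← Functor.map_comp]
    rw [biproduct.ι_π_ne _ hb]
    simp
  · simp

lemma ι_EE (d : ℕ) (j : Fin d) :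
    (DerivedCategory.singleFunctor C 0).map (biproduct.ι (fun _ : Fin d => A) j) ≫ EE A e d =
    e ≫ ((DerivedCategory.singleFunctor C 0).map
      (biproduct.ι (fun _ : Fin d => A) j))⟦(2 : ℤ)⟧' := by
  rw [EE, Preadditive.comp_sum, Finset.sum_eq_single j]
  · rw [← Category.assoc, ← Functor.map_comp, biproduct.ι_π_self, CategoryTheory.Functor.map_id,
      Category.id_comp]
  · intro b _ hb
    rw [← Category.assoc, ← Functor.map_comp]
    rw [biproduct.ι_π_ne _ hb.symm]
    simp
  · simp

lemma ι_rmap_π {d d' : ℕ} (f : (Fin d → k) →ₗ[k] (Fin d' → k)) (i : Fin d) (j : Fin d') :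
    biproduct.ι (fun _ : Fin d => A) i ≫ rmap A f ≫ biproduct.π (fun _ : Fin d' => A) j
      = f (Pi.single i 1) j • 𝟙 A := by
  simp [rmap]

lemma rmap_EE_comp {d d' : ℕ} (f : (Fin d → k) →ₗ[k] (Fin d' → k)) (i : Fin d) (j : Fin d') :
    (DerivedCategory.singleFunctor C 0).map (biproduct.ι (fun _ : Fin d => A) i) ≫
      ((DerivedCategory.singleFunctor C 0).map (rmap A f) ≫ EE A e d') ≫
        ((DerivedCategory.singleFunctor C 0).map
          (biproduct.π (fun _ : Fin d' => A) j))⟦(2 : ℤ)⟧' = f (Pi.single i 1) j • e := by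
  rw [Category.assoc, EE_π, ← Category.assoc, ← Category.assoc, ← Functor.map_comp,
    ← Functor.map_comp, Category.assoc, ι_rmap_π, Functor.map_smul, Linear.smul_comp,
    CategoryTheory.Functor.map_id, Category.id_comp]

lemma EE_nat {d d' : ℕ} (f : (Fin d → k) →ₗ[k] (Fin d' → k)) :
    (DerivedCategory.singleFunctor C 0).map (rmap A f) ≫ EE A e d' =
      EE A e d ≫ ((DerivedCategory.singleFunctor C 0).map (rmap A f))⟦(2 : ℤ)⟧' := by
  apply PP_hom_ext
  intro i j
  rw [rmap_EE_comp, ← Category.assoc, ← Category.assoc, ι_EE, Category.assoc, Category.assoc,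
    ← Functor.map_comp, ← Functor.map_comp, ← Functor.map_comp, ← Functor.map_comp, ι_rmap_π,
    Functor.map_smul, Functor.map_smul, Linear.comp_smul,
    CategoryTheory.Functor.map_id, CategoryTheory.Functor.map_id, Category.comp_id]

lemma exists_rmap (he : ∀ φ : (DerivedCategory.singleFunctor C 0).obj A ⟶
      ((DerivedCategory.singleFunctor C 0).obj A)⟦(2 : ℤ)⟧,
      ∃ c : k, φ = (DerivedCategory.singleFunctor C 0).map (c • 𝟙 A) ≫ e)
    {d d' : ℕ} (φ : PP A d ⟶ (PP A d')⟦(2 : ℤ)⟧) :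
    ∃ f : (Fin d → k) →ₗ[k] (Fin d' → k),
      φ = (DerivedCategory.singleFunctor C 0).map (rmap A f) ≫ EE A e d' := by
  choose c hc using he
  refine ⟨Matrix.toLin' (Matrix.of fun j i => c
    ((DerivedCategory.singleFunctor C 0).map (biproduct.ι (fun _ : Fin d => A) i) ≫ φ ≫
        ((DerivedCategory.singleFunctor C 0).map
          (biproduct.π (fun _ : Fin d' => A) j))⟦(2 : ℤ)⟧')), ?_⟩
  apply PP_hom_ext
  intro i j
  rw [rmap_EE_comp]
  conv_lhs => rw [hc ((DerivedCategory.singleFunctor C 0).map _ ≫ φ ≫ _)]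
  rw [Functor.map_smul, Linear.smul_comp, CategoryTheory.Functor.map_id, Category.id_comp]
  simp

lemma PP_hom_zero (n : ℤ) (h : ∀ φ : (DerivedCategory.singleFunctor C 0).obj A ⟶
      ((DerivedCategory.singleFunctor C 0).obj A)⟦n⟧, φ = 0)
    {d d' : ℕ} (φ : PP A d ⟶ (PP A d')⟦n⟧) : φ = 0 := by
  apply PP_hom_ext
  intro i j
  exact (h _).trans (h _).symm

end

lemma PP_zero_isZero (A : C) : IsZero (PP A 0) := by
  rw [IsZero.iff_id_eq_zero, ← PP_total]
  simp

/-- the flag of kernels, one step further. -/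
def consFlag {d d' : ℕ} (M : (Fin d' → k) →ₗ[k] (Fin d → k)) (F : ℕ → Submodule k (Fin d → k)) :
    ℕ → Submodule k (Fin d' → k)
  | 0 => ⊥
  | j + 1 => (F j).comap M

/-- Iterated extensions: `X` is an iterated extension of shifts of powers of `A`, with
numerical invariants `I`, flag `F` on the top cohomology, and projection `p` to the top
cohomology. -/
inductive Tower (A : C) (e : (DerivedCategory.singleFunctor C 0).obj A ⟶
    ((DerivedCategory.singleFunctor C 0).obj A)⟦(2 : ℤ)⟧) :
    (I : List (List ℕ)) → (d : ℕ) → (F : ℕ → Submodule k (Fin d → k)) →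
    (X : DerivedCategory C) → (p : X ⟶ PP A d) → Prop
  | nil (X : DerivedCategory C) (hX : IsZero X) (p : X ⟶ PP A 0) : Tower A e [] 0 (fun _ => ⊤) X p
  | cons {I : List (List ℕ)} {d : ℕ} {F : ℕ → Submodule k (Fin d → k)}
      {Y : DerivedCategory C} {q : Y ⟶ PP A d} (h : Tower A e I d F Y q) {d' : ℕ}
      (M : (Fin d' → k) →ₗ[k] (Fin d → k)) (X : DerivedCategory C) (p : X ⟶ PP A d')
      (δ : PP A d' ⟶ Y⟦(2 : ℤ)⟧) (η : Y⟦(2 : ℤ)⟧ ⟶ X⟦(1 : ℤ)⟧)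
      (hT : Triangle.mk p δ η ∈ distTriang (DerivedCategory C))
      (hδ : δ ≫ q⟦(2 : ℤ)⟧' = (DerivedCategory.singleFunctor C 0).map (rmap A M) ≫ EE A e d) :
      Tower A e (((List.range (I.length + 2)).map fun j => finrank k (consFlag M F j)) :: I) d'
        (consFlag M F) X p

section
variable {A : C} {e : (DerivedCategory.singleFunctor C 0).obj A ⟶
    ((DerivedCategory.singleFunctor C 0).obj A)⟦(2 : ℤ)⟧}

lemma Tower.flag {I : List (List ℕ)} {d : ℕ} {F : ℕ → Submodule k (Fin d → k)}
    {X : DerivedCategory C} {p : X ⟶ PP A d} (h : Tower A e I d F X p) :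
    Monotone F ∧ F 0 = ⊥ ∧ ∀ j, I.length ≤ j → F j = ⊤ := by
  induction h with
  | nil X hX p =>
    exact ⟨monotone_const, Subsingleton.elim _ _, fun _ _ => rfl⟩
  | cons h M X p δ η hT hδ ih =>
    refine ⟨monotone_nat_of_le_succ ?_, rfl, ?_⟩
    · intro n
      cases n with
      | zero => exact bot_le
      | succ n => exact Submodule.comap_mono (ih.1 (Nat.le_succ n))
    · intro j hj
      cases j with
      | zero => simp at hj
      | succ j =>
        simp only [List.length_cons, add_le_add_iff_right] at hj
        simp [consFlag, ih.2.2 j hj]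

lemma triangle_inj {X P Y Z : DerivedCategory C} (p : X ⟶ P) (δ : P ⟶ Y⟦(2 : ℤ)⟧)
    (η : Y⟦(2 : ℤ)⟧ ⟶ X⟦(1 : ℤ)⟧)
    (hT : Triangle.mk p δ η ∈ distTriang (DerivedCategory C)) (j : ℤ)
    (hY : ∀ φ : Z ⟶ Y⟦j + 1⟧, φ = 0) (φ : Z ⟶ X⟦j⟧) (hφ : φ ≫ p⟦j⟧' = 0) : φ = 0 := by
  have hT2 := inv_rot_of_distTriang _ (Triangle.shift_distinguished _ hT j)
  obtain ⟨g, hg⟩ := Triangle.coyoneda_exact₂ _ hT2 φ (by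
    change φ ≫ (j.negOnePow • p⟦j⟧') = 0
    rw [Linear.comp_units_smul, hφ, smul_zero])
  let i : (((Y⟦(2 : ℤ)⟧)⟦j⟧)⟦(-1 : ℤ)⟧) ≅ Y⟦j + 1⟧ :=
    (shiftFunctor _ (-1 : ℤ)).mapIso ((shiftFunctorAdd' (DerivedCategory C) 2 j (j+2) (by lia)).symm.app Y) ≪≫
      (shiftFunctorAdd' (DerivedCategory C) (j + 2) (-1) (j+1) (by lia)).symm.app Y
  have hz : ∀ g : Z ⟶ (((Y⟦(2 : ℤ)⟧)⟦j⟧)⟦(-1 : ℤ)⟧), g = 0 := by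
    intro g
    rw [← cancel_mono i.hom, zero_comp]
    exact hY _
  have hg0 : g = 0 := hz g
  rw [hg, hg0]
  exact zero_comp

lemma Tower.vanish (hA : ∀ i : ℕ, 1 ≤ i → i ≠ 2 →
    ∀ φ : (DerivedCategory.singleFunctor C 0).obj A ⟶
        ((DerivedCategory.singleFunctor C 0).obj A)⟦(i : ℤ)⟧, φ = 0)
    {I : List (List ℕ)} {d : ℕ} {F : ℕ → Submodule k (Fin d → k)}
    {X : DerivedCategory C} {p : X ⟶ PP A d} (h : Tower A e I d F X p) :
    ∀ (j : ℤ), 3 ≤ j → ∀ (m : ℕ) (φ : PP A m ⟶ X⟦j⟧), φ = 0 := by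
  induction h with
  | nil X hX p =>
    intro j _ m φ
    exact ((shiftFunctor (DerivedCategory C) j).map_isZero hX).eq_of_tgt _ _
  | cons h M X p δ η hT hδ ih =>
    intro j hj m φ
    refine triangle_inj p δ η hT j (ih (j+1) (by lia) m) φ ?_
    apply PP_hom_zero
    lift j to ℕ using (by lia)
    exact hA j (by lia) (by lia)

lemma Tower.inj (hA : ∀ i : ℕ, 1 ≤ i → i ≠ 2 →
    ∀ φ : (DerivedCategory.singleFunctor C 0).obj A ⟶
        ((DerivedCategory.singleFunctor C 0).obj A)⟦(i : ℤ)⟧, φ = 0)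
    {I : List (List ℕ)} {d : ℕ} {F : ℕ → Submodule k (Fin d → k)}
    {X : DerivedCategory C} {p : X ⟶ PP A d} (h : Tower A e I d F X p)
    (m : ℕ) (φ : PP A m ⟶ X⟦(2 : ℤ)⟧) (hφ : φ ≫ p⟦(2 : ℤ)⟧' = 0) : φ = 0 := by
  cases h with
  | nil _ hX _ =>
    exact ((shiftFunctor (DerivedCategory C) (2 : ℤ)).map_isZero hX).eq_of_tgt _ _
  | cons h M _ _ δ η hT hδ =>
    exact triangle_inj p δ η hT 2 (h.vanish hA _ (by lia) m) φ hφ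

/-- the first entry of the invariants determines the dimension of the flags -/
lemma finrank_eq_of_map_eq {n : ℕ} {d d' : ℕ} {F : ℕ → Submodule k (Fin d → k)}
    {F' : ℕ → Submodule k (Fin d' → k)} (hF : ∀ j, n + 1 ≤ j → F j = ⊤)
    (hF' : ∀ j, n + 1 ≤ j → F' j = ⊤)
    (h : ((List.range (n + 2)).map fun j => finrank k (F j)) =
      ((List.range (n + 2)).map fun j => finrank k (F' j))) (j : ℕ) :
    finrank k (F j) = finrank k (F' j) := by
  rw [List.map_inj_left] at h
  rcases le_or_gt j (n + 1) with hj | hj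
  · exact h j (by simp; omega)
  · have := h (n + 1) (by simp)
    rw [hF _ le_rfl, hF' _ le_rfl] at this
    rw [hF _ hj.le, hF' _ hj.le, this]

lemma Tower.finrank_eq {I : List (List ℕ)} {d : ℕ} {F : ℕ → Submodule k (Fin d → k)}
    {X : DerivedCategory C} {p : X ⟶ PP A d} (h : Tower A e I d F X p)
    {I' : List (List ℕ)} {d' : ℕ} {F' : ℕ → Submodule k (Fin d' → k)}
    {X' : DerivedCategory C} {p' : X' ⟶ PP A d'} (h' : Tower A e I' d' F' X' p')
    (hI : I = I') (j : ℕ) : finrank k (F j) = finrank k (F' j) := by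
  have hf := h.flag
  have hf' := h'.flag
  cases h with
  | nil _ hX _ =>
    cases h' with
    | nil _ hX' _ => rfl
    | cons => simp at hI
  | cons h M _ _ δ η hT hδ =>
    cases h' with
    | nil _ hX' _ => simp at hI
    | cons h' M' _ _ δ' η' hT' hδ' =>
      obtain ⟨h1, h2⟩ := List.cons.inj hI
      subst h2
      exact finrank_eq_of_map_eq hf.2.2 hf'.2.2 h1 j

theorem Tower.iso (hA : ∀ i : ℕ, 1 ≤ i → i ≠ 2 →
    ∀ φ : (DerivedCategory.singleFunctor C 0).obj A ⟶
        ((DerivedCategory.singleFunctor C 0).obj A)⟦(i : ℤ)⟧, φ = 0)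
    {I : List (List ℕ)} {d : ℕ} {F : ℕ → Submodule k (Fin d → k)}
    {X : DerivedCategory C} {p : X ⟶ PP A d} (h : Tower A e I d F X p) :
    ∀ {I' : List (List ℕ)} {d' : ℕ} {F' : ℕ → Submodule k (Fin d' → k)}
    {X' : DerivedCategory C} {p' : X' ⟶ PP A d'} (_ : Tower A e I' d' F' X' p')
    (_ : I = I') (g : (Fin d → k) ≃ₗ[k] (Fin d' → k)) (_ : ∀ v j, v ∈ F j ↔ g v ∈ F' j),
    ∃ φ : X ≅ X', p ≫ (DerivedCategory.singleFunctor C 0).map (rmap A g.toLinearMap) =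
      φ.hom ≫ p' := by
  induction h with
  | nil X hX p =>
    intro I' d' F' X' p' h' hI g hg
    cases h' with
    | nil _ hX' _ => exact ⟨hX.iso hX', hX.eq_of_src _ _⟩
    | cons => simp at hI
  | @cons I d F Y q h d₂ M X p δ η hT hδ ih =>
    intro I' d' F' X' p' h' hI g hg
    cases h' with
    | nil _ hX' _ => simp at hI
    | @cons I' _ F' Y' q' h' _ M' _ _ δ' η' hT' hδ' =>
      obtain ⟨h1, h2⟩ := List.cons.inj hI
      obtain ⟨gt, hgt1, hgt2⟩ := flag_ext F F' h.flag.1 h'.flag.1 h.flag.2.1 h'.flag.2.1 I.length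
        (h.flag.2.2 _ le_rfl) (h'.flag.2.2 _ (by rw [h2])) (h.finrank_eq h' h2) M
        (M' ∘ₗ g.toLinearMap) (fun u j => hg u (j + 1))
      obtain ⟨φ, hφ⟩ := ih h' h2 gt hgt2
      have hM : gt.toLinearMap ∘ₗ M = M' ∘ₗ g.toLinearMap := LinearMap.ext hgt1
      have comm : δ ≫ φ.hom⟦(2 : ℤ)⟧' =
          (DerivedCategory.singleFunctor C 0).map (rmap A g.toLinearMap) ≫ δ' := by
        rw [← sub_eq_zero]
        apply h'.inj hA
        rw [Preadditive.sub_comp, sub_eq_zero, Category.assoc, Category.assoc, ← Functor.map_comp,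
          ← hφ, Functor.map_comp, hδ', reassoc_of% hδ, ← EE_nat, ← Functor.map_comp_assoc,
          ← Functor.map_comp_assoc, rmap_comp, rmap_comp, hM]
      obtain ⟨a, ha1, ha2⟩ := complete_distinguished_triangle_morphism₁ _ _ hT hT'
        ((DerivedCategory.singleFunctor C 0).map (rmap A g.toLinearMap)) (φ.hom⟦(2 : ℤ)⟧') comm
      have hi2 : IsIso ((DerivedCategory.singleFunctor C 0).map (rmap A g.toLinearMap)) :=
        ((DerivedCategory.singleFunctor C 0).mapIso (riso A g)).isIso_hom
      have hi3 : IsIso (φ.hom⟦(2 : ℤ)⟧') := inferInstance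
      let Φ : Triangle.mk p δ η ⟶ Triangle.mk p' δ' η' :=
        { hom₁ := a
          hom₂ := (DerivedCategory.singleFunctor C 0).map (rmap A g.toLinearMap)
          hom₃ := φ.hom⟦(2 : ℤ)⟧'
          comm₁ := ha1
          comm₂ := comm
          comm₃ := ha2 }
      have : IsIso a := isIso₁_of_isIso₂₃ Φ hT hT' hi2 hi3
      exact ⟨@asIso _ _ X X' a this, ha1⟩

theorem Tower.nonempty_iso (hA : ∀ i : ℕ, 1 ≤ i → i ≠ 2 →
    ∀ φ : (DerivedCategory.singleFunctor C 0).obj A ⟶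
        ((DerivedCategory.singleFunctor C 0).obj A)⟦(i : ℤ)⟧, φ = 0)
    {I : List (List ℕ)} {d : ℕ} {F : ℕ → Submodule k (Fin d → k)}
    {X : DerivedCategory C} {p : X ⟶ PP A d} (h : Tower A e I d F X p)
    {d' : ℕ} {F' : ℕ → Submodule k (Fin d' → k)}
    {X' : DerivedCategory C} {p' : X' ⟶ PP A d'} (h' : Tower A e I d' F' X' p') :
    Nonempty (X ≅ X') := by
  obtain ⟨g, -, hg⟩ := flag_ext F F' h.flag.1 h'.flag.1 h.flag.2.1 h'.flag.2.1 I.length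
    (h.flag.2.2 _ le_rfl) (h'.flag.2.2 _ le_rfl) (h.finrank_eq h' rfl)
    (0 : (Fin 0 → k) →ₗ[k] _) (0 : (Fin 0 → k) →ₗ[k] _) (by intro u j; simp)
  obtain ⟨φ, -⟩ := h.iso hA h' rfl g hg
  exact ⟨φ⟩

end

lemma homology_shift (X : DerivedCategory C) (n a a' : ℤ) (h : n + a = a') :
    Nonempty ((DerivedCategory.homologyFunctor C a).obj (X⟦n⟧) ≅
      (DerivedCategory.homologyFunctor C a').obj X) :=
  ⟨((DerivedCategory.homologyFunctor C 0).shiftIso n a a' h).app X⟩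

theorem exists_tower (A : C) (e : (DerivedCategory.singleFunctor C 0).obj A ⟶
      ((DerivedCategory.singleFunctor C 0).obj A)⟦(2 : ℤ)⟧)
    (he : ∀ φ : (DerivedCategory.singleFunctor C 0).obj A ⟶
      ((DerivedCategory.singleFunctor C 0).obj A)⟦(2 : ℤ)⟧,
      ∃ c : k, φ = (DerivedCategory.singleFunctor C 0).map (c • 𝟙 A) ≫ e) (n : ℕ) :
    ∀ X : DerivedCategory C,
      (∀ i : ℤ, ∃ d : ℕ,
        Nonempty ((DerivedCategory.homologyFunctor C i).obj X ≅ ⨁ (fun _ : Fin d => A))) →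
      (∀ i : ℤ, (0 < i ∨ i ≤ -(n : ℤ)) →
        IsZero ((DerivedCategory.homologyFunctor C i).obj X)) →
      ∃ (I : List (List ℕ)) (d : ℕ) (F : ℕ → Submodule k (Fin d → k)) (p : X ⟶ PP A d),
        Tower A e I d F X p := by
  induction n with
  | zero =>
    intro X _ hX
    have h1 : X.IsLE 0 := (DerivedCategory.isLE_iff X 0).2 fun i hi => hX i (Or.inl hi)
    have h2 : X.IsGE 1 := (DerivedCategory.isGE_iff X 1).2 fun i hi => hX i (Or.inr (by
      simp only [Nat.cast_zero, neg_zero]; lia))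
    exact ⟨[], 0, _, 0, Tower.nil X (DerivedCategory.TStructure.t.isZero X 0 1 (by lia)) 0⟩
  | succ n ih =>
    intro X hX1 hX2
    obtain ⟨L, G, hL, hG, f, g, h, hT⟩ :=
      (DerivedCategory.TStructure.t (C := C)).exists_triangle X (-1) 0 (by lia)
    have hL' : L.IsLE (-1) := ⟨hL⟩
    have hG' : G.IsGE 0 := ⟨hG⟩
    have zL : ∀ i : ℤ, -1 < i → IsZero ((DerivedCategory.homologyFunctor C i).obj L) :=
      fun i hi => DerivedCategory.isZero_of_isLE L (-1) i hi
    have zG : ∀ i : ℤ, i < 0 → IsZero ((DerivedCategory.homologyFunctor C i).obj G) :=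
      fun i hi => DerivedCategory.isZero_of_isGE G 0 i hi
    have zG2 : G.IsLE 0 := by
      rw [DerivedCategory.isLE_iff]
      intro i hi
      have ex := DerivedCategory.HomologySequence.exact₃ _ hT i (i+1) rfl
      exact ex.isZero_of_both_zeros ((hX2 i (Or.inl hi)).eq_of_src _ _)
        ((zL (i+1) (by lia)).eq_of_tgt _ _)
    have isoG : IsIso ((DerivedCategory.homologyFunctor C 0).map g) := by
      have m : Mono ((DerivedCategory.homologyFunctor C 0).map g) :=
        (DerivedCategory.HomologySequence.mono_homologyMap_mor₂_iff _ hT 0).2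
          ((zL 0 (by lia)).eq_of_src _ _)
      have ep : Epi ((DerivedCategory.homologyFunctor C 0).map g) :=
        (DerivedCategory.HomologySequence.epi_homologyMap_mor₂_iff _ hT 0 1 (by lia)).2
          ((zL 1 (by lia)).eq_of_tgt _ _)
      exact isIso_of_mono_of_epi _
    have isoL : ∀ i : ℤ, i ≤ -1 → IsIso ((DerivedCategory.homologyFunctor C i).map f) := by
      intro i hi
      have m : Mono ((DerivedCategory.homologyFunctor C i).map f) :=
        (DerivedCategory.HomologySequence.mono_homologyMap_mor₁_iff _ hT (i-1) i (by lia)).2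
          ((zG (i-1) (by lia)).eq_of_src _ _)
      have ep : Epi ((DerivedCategory.homologyFunctor C i).map f) :=
        (DerivedCategory.HomologySequence.epi_homologyMap_mor₁_iff _ hT i).2
          ((zG i (by lia)).eq_of_tgt _ _)
      exact isIso_of_mono_of_epi _
    obtain ⟨Gc, ⟨w⟩⟩ := DerivedCategory.exists_iso_singleFunctor_obj_of_isGE_of_isLE G 0
    obtain ⟨d, ⟨w'⟩⟩ := hX1 0
    let wc : Gc ≅ ⨁ (fun _ : Fin d => A) :=
      ((DerivedCategory.singleFunctorCompHomologyFunctorIso C 0).app Gc).symm ≪≫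
        (DerivedCategory.homologyFunctor C 0).mapIso w.symm ≪≫
        (asIso ((DerivedCategory.homologyFunctor C 0).map g)).symm ≪≫ w'
    let u : G ≅ PP A d := w ≪≫ (DerivedCategory.singleFunctor C 0).mapIso wc
    let Y : DerivedCategory C := L⟦(-1 : ℤ)⟧
    let v : Y⟦(2 : ℤ)⟧ ≅ L⟦(1 : ℤ)⟧ :=
      (shiftFunctorAdd' (DerivedCategory C) (-1) 2 1 (by lia)).symm.app L
    have hY0 : ∀ i : ℤ, IsZero ((DerivedCategory.homologyFunctor C (i-1)).obj L) →
        IsZero ((DerivedCategory.homologyFunctor C i).obj Y) := by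
      intro i hi
      obtain ⟨s⟩ := homology_shift L (-1) i (i-1) (by lia)
      exact hi.of_iso s
    obtain ⟨I, d₁, F, q, hq⟩ := ih Y (by
      intro i
      rcases le_or_gt i 0 with hi | hi
      · obtain ⟨s⟩ := homology_shift L (-1) i (i-1) (by lia)
        obtain ⟨d₂, ⟨w₂⟩⟩ := hX1 (i-1)
        have := isoL (i-1) (by lia)
        exact ⟨d₂, ⟨s ≪≫ asIso ((DerivedCategory.homologyFunctor C (i-1)).map f) ≪≫ w₂⟩⟩
      · refine ⟨0, ⟨(hY0 i (zL _ (by lia))).iso ?_⟩⟩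
        rw [IsZero.iff_id_eq_zero, ← biproduct.total]
        simp) (by
      intro i hi
      apply hY0
      rcases hi with hi | hi
      · exact zL _ (by lia)
      · have := isoL (i-1) (by lia)
        exact (hX2 (i-1) (Or.inr (by push_cast; lia))).of_iso
          (asIso ((DerivedCategory.homologyFunctor C (i-1)).map f)))
    obtain ⟨M, hM⟩ := exists_rmap A e he ((u.inv ≫ h ≫ v.inv) ≫ q⟦(2 : ℤ)⟧')
    refine ⟨_, d, _, g ≫ u.hom, Tower.cons hq M X (g ≫ u.hom) (u.inv ≫ h ≫ v.inv)
      (v.hom ≫ (-f⟦(1 : ℤ)⟧')) ?_ hM⟩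
    refine isomorphic_distinguished _ (rot_of_distTriang _ hT) _ ?_
    exact Triangle.isoMk _ _ (Iso.refl X) u.symm v
      (by
        change (g ≫ u.hom) ≫ u.inv = 𝟙 X ≫ g
        rw [Category.assoc, Iso.hom_inv_id, Category.comp_id, Category.id_comp])
      (by
        change (u.inv ≫ h ≫ v.inv) ≫ v.hom = u.inv ≫ h
        rw [Category.assoc, Category.assoc, Iso.inv_hom_id, Category.comp_id]) (by
      change (v.hom ≫ (-f⟦(1 : ℤ)⟧')) ≫ (𝟙 X)⟦(1 : ℤ)⟧' = v.hom ≫ (-f⟦(1 : ℤ)⟧')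
      rw [CategoryTheory.Functor.map_id, Category.comp_id])

theorem main_aux (A : C) (e : (DerivedCategory.singleFunctor C 0).obj A ⟶
      ((DerivedCategory.singleFunctor C 0).obj A)⟦(2 : ℤ)⟧)
    (he : ∀ φ : (DerivedCategory.singleFunctor C 0).obj A ⟶
      ((DerivedCategory.singleFunctor C 0).obj A)⟦(2 : ℤ)⟧,
      ∃ c : k, φ = (DerivedCategory.singleFunctor C 0).map (c • 𝟙 A) ≫ e)
    (hA : ∀ i : ℕ, 1 ≤ i → i ≠ 2 →
      ∀ φ : (DerivedCategory.singleFunctor C 0).obj A ⟶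
        ((DerivedCategory.singleFunctor C 0).obj A)⟦(i : ℤ)⟧, φ = 0) :
    ∃ B : ℕ → DerivedCategory C, ∀ X : DerivedCategory C,
      (∀ i : ℤ, ∃ d : ℕ,
        Nonempty ((DerivedCategory.homologyFunctor C i).obj X ≅ ⨁ (fun _ : Fin d => A))) →
      (∃ a b : ℤ, ∀ i : ℤ, (i < a ∨ b < i) →
        IsZero ((DerivedCategory.homologyFunctor C i).obj X)) →
      ∃ m : ℕ, Nonempty (X ≅ B m) := by
  classical
  let Good : ℤ × List (List ℕ) → DerivedCategory C → Prop := fun t X =>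
    ∃ (d : ℕ) (F : ℕ → Submodule k (Fin d → k)) (p : X⟦t.1⟧ ⟶ PP A d),
      Tower A e t.2 d F (X⟦t.1⟧) p
  let B₀ : ℤ × List (List ℕ) → DerivedCategory C := fun t =>
    if h : ∃ X, Good t X then h.choose else PP A 0
  have hB₀ : ∀ t X, Good t X → Good t (B₀ t) := by
    intro t X hX
    have h : ∃ X, Good t X := ⟨X, hX⟩
    simp only [B₀, dif_pos h]
    exact h.choose_spec
  obtain ⟨s, hs⟩ := exists_surjective_nat (ℤ × List (List ℕ))
  refine ⟨fun m => B₀ (s m), ?_⟩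
  rintro X hX ⟨a, b, hab⟩
  obtain ⟨I, d, F, p, hp⟩ := exists_tower A e he (b - a + 1).toNat (X⟦b⟧) (by
      intro i
      obtain ⟨w⟩ := homology_shift X b i (b + i) rfl
      obtain ⟨d, ⟨w'⟩⟩ := hX (b + i)
      exact ⟨d, ⟨w ≪≫ w'⟩⟩) (by
      intro i hi
      obtain ⟨w⟩ := homology_shift X b i (b + i) rfl
      exact (hab (b + i) (by lia)).of_iso w)
  have hG : Good (b, I) X := ⟨d, F, p, hp⟩
  obtain ⟨m, hm⟩ := hs (b, I)
  refine ⟨m, ?_⟩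
  obtain ⟨d', F', p', hp'⟩ := hB₀ _ _ hG
  obtain ⟨φ⟩ := hp.nonempty_iso hA hp'
  change Nonempty (X ≅ B₀ (s m))
  rw [hm]
  exact ⟨(shiftFunctor (DerivedCategory C) b).preimageIso φ⟩


end Aux

/-- **Proposition 3.6 (countability part).** Let `A` be an object of the `k`-linear
abelian category `C` satisfying the hypotheses (3.3).  Then the objects `B` of the
bounded derived category of `C` all of whose cohomology objects are finite direct sums of
copies of `A` (and vanish outside a bounded range) form only countably many isomorphism
classes: there is a sequence `(B_m)_{m ∈ ℕ}` such that every such `B` is isomorphic to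
some `B_m`. -/
theorem stmt1 (A : C) (hA : GoodBase k A) :
    ∃ B : ℕ → DerivedCategory C, ∀ X : DerivedCategory C,
      (∀ i : ℤ, ∃ d : ℕ,
        Nonempty ((DerivedCategory.homologyFunctor C i).obj X ≅ ⨁ (fun _ : Fin d => A))) →
      (∃ a b : ℤ, ∀ i : ℤ, (i < a ∨ b < i) →
        IsZero ((DerivedCategory.homologyFunctor C i).obj X)) →
      ∃ m : ℕ, Nonempty (X ≅ B m) := by
  obtain ⟨-, ⟨e, -, he⟩, hv⟩ := hA
  exact main_aux A e he hv

end ThreeCusps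
end

section
/- Let k be a field and C a k-linear abelian category, and let A be an object of C with Hom(A,A) and Ext^2(A,A) one-dimensional over k and Ext^i(A,A) = 0 for all i ≥ 1 with i ≠ 2. Then for every n ∈ ℕ there exists an object of D^b(C) of type A_n, i.e. an object X with H^i(X) ≅ A for 0 ≤ i ≤ n, H^i(X) = 0 for all other i, and Hom_{D^b(C)}(A, X[j]) one-dimensional over k for j ∈ {0, n+2} and zero for every other j ∈ ℤ. (Existence part of Lemma 3.4.) -/
open CategoryTheory Limits

namespace ThreeCusps

variable (k : Type*) [Field k]
variable {C : Type*} [Category C] [Abelian C] [CategoryTheory.Linear k C]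
  [HasDerivedCategory C]

section Helpers

open Pretriangulated

variable {k}

lemma HomIsLine.of_bij {A : C} {Y Y' : DerivedCategory C} (f : Y ⟶ Y')
    (inj : ∀ φ : (DerivedCategory.singleFunctor C 0).obj A ⟶ Y, φ ≫ f = 0 → φ = 0)
    (surj : ∀ ψ : (DerivedCategory.singleFunctor C 0).obj A ⟶ Y', ∃ φ, ψ = φ ≫ f)
    (h : HomIsLine k A Y) : HomIsLine k A Y' := by
  obtain ⟨e, he, hs⟩ := h
  refine ⟨e ≫ f, fun h0 => he (inj _ h0), fun ψ => ?_⟩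
  obtain ⟨φ, rfl⟩ := surj ψ
  obtain ⟨c, rfl⟩ := hs φ
  exact ⟨c, by simp⟩

lemma HomIsLine.of_bij' {A : C} {Y Y' : DerivedCategory C} (f : Y ⟶ Y')
    (inj : ∀ φ : (DerivedCategory.singleFunctor C 0).obj A ⟶ Y, φ ≫ f = 0 → φ = 0)
    (surj : ∀ ψ : (DerivedCategory.singleFunctor C 0).obj A ⟶ Y', ∃ φ, ψ = φ ≫ f)
    (h : HomIsLine k A Y') : HomIsLine k A Y := by
  obtain ⟨e, he, hs⟩ := h
  obtain ⟨e', rfl⟩ := surj e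
  refine ⟨e', fun h0 => he (by simp [h0]), fun φ => ?_⟩
  obtain ⟨c, hc⟩ := hs (φ ≫ f)
  refine ⟨c, ?_⟩
  rw [← sub_eq_zero]
  apply inj
  rw [Preadditive.sub_comp, hc, Category.assoc, sub_self]

lemma HomIsLine.of_iso {A : C} {Y Y' : DerivedCategory C} (f : Y ≅ Y')
    (h : HomIsLine k A Y) : HomIsLine k A Y' :=
  h.of_bij f.hom (fun φ h => by simpa using h =≫ f.inv) (fun ψ => ⟨ψ ≫ f.inv, by simp⟩)

def HomZero (A : C) (Y : DerivedCategory C) : Prop :=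
  ∀ φ : (DerivedCategory.singleFunctor C 0).obj A ⟶ Y, φ = 0

lemma HomZero.of_iso {A : C} {Y Y' : DerivedCategory C} (f : Y ≅ Y')
    (h : HomZero A Y) : HomZero A Y' := fun φ => by
  simpa using h (φ ≫ f.inv) =≫ f.hom

lemma shift_exact {X₁ X₂ X₃ : DerivedCategory C} {f : X₁ ⟶ X₂} {g : X₂ ⟶ X₃}
    {d : X₃ ⟶ X₁⟦(1 : ℤ)⟧} (hT : Triangle.mk f g d ∈ distTriang _) (j : ℤ)
    {X : DerivedCategory C} (φ : X ⟶ X₂⟦j⟧) (h : φ ≫ g⟦j⟧' = 0) :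
    ∃ ψ : X ⟶ X₁⟦j⟧, φ = ψ ≫ f⟦j⟧' := by
  obtain ⟨ψ, hψ⟩ : ∃ ψ : X ⟶ X₁⟦j⟧, φ = ψ ≫ (j.negOnePow • f⟦j⟧') :=
    Triangle.coyoneda_exact₂ _ (Triangle.shift_distinguished _ hT j) φ
    (by
      change φ ≫ (j.negOnePow • g⟦j⟧') = 0
      rw [Linear.comp_units_smul, h, smul_zero])
  refine ⟨j.negOnePow • ψ, ?_⟩
  rw [hψ, Linear.comp_units_smul, Linear.units_smul_comp]

lemma shift_exact₃ {X₁ X₂ X₃ : DerivedCategory C} {f : X₁ ⟶ X₂} {g : X₂ ⟶ X₃}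
    {d : X₃ ⟶ X₁⟦(1 : ℤ)⟧} (hT : Triangle.mk f g d ∈ distTriang _) (j : ℤ)
    {X : DerivedCategory C} (φ : X ⟶ X₃⟦j⟧) (h : φ ≫ d⟦j⟧' = 0) :
    ∃ ψ : X ⟶ X₂⟦j⟧, φ = ψ ≫ g⟦j⟧' :=
  shift_exact (rot_of_distTriang _ hT) j φ h

lemma shift_exact₁ {X₁ X₂ X₃ : DerivedCategory C} {f : X₁ ⟶ X₂} {g : X₂ ⟶ X₃}
    {d : X₃ ⟶ X₁⟦(1 : ℤ)⟧} (hT : Triangle.mk f g d ∈ distTriang _) (j : ℤ)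
    {X : DerivedCategory C} (φ : X ⟶ X₁⟦(1 : ℤ)⟧⟦j⟧) (h : φ ≫ f⟦(1 : ℤ)⟧'⟦j⟧' = 0) :
    ∃ ψ : X ⟶ X₃⟦j⟧, φ = ψ ≫ d⟦j⟧' :=
  shift_exact (rot_of_distTriang _ (rot_of_distTriang _ hT)) j φ (by
    change φ ≫ (shiftFunctor _ j).map (-(f⟦(1 : ℤ)⟧')) = 0
    rw [Functor.map_neg, Preadditive.comp_neg, h, neg_zero])

lemma exact_unshifted {X₁ X₂ X₃ : DerivedCategory C} {f : X₁ ⟶ X₂} {g : X₂ ⟶ X₃}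
    {d : X₃ ⟶ X₁⟦(1 : ℤ)⟧} (hT : Triangle.mk f g d ∈ distTriang _)
    {X : DerivedCategory C} (φ : X ⟶ X₃) (h : φ ≫ d = 0) :
    ∃ ψ : X ⟶ X₂, φ = ψ ≫ g :=
  Triangle.coyoneda_exact₃ _ hT φ h

lemma exact_neg_one {X₁ X₂ X₃ : DerivedCategory C} {f : X₁ ⟶ X₂} {g : X₂ ⟶ X₃}
    {d : X₃ ⟶ X₁⟦(1 : ℤ)⟧} (hT : Triangle.mk f g d ∈ distTriang _) :
    ∃ (u : X₂⟦(-1 : ℤ)⟧ ⟶ X₃⟦(-1 : ℤ)⟧) (v : X₃⟦(-1 : ℤ)⟧ ⟶ X₁), v ≫ f = 0 ∧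
      ∀ {X : DerivedCategory C} (φ : X ⟶ X₃⟦(-1 : ℤ)⟧), φ ≫ v = 0 →
        ∃ ψ : X ⟶ X₂⟦(-1 : ℤ)⟧, φ = ψ ≫ u := by
  have hT' := inv_rot_of_distTriang _ hT
  have hT'' := inv_rot_of_distTriang _ hT'
  exact ⟨(Triangle.mk f g d).invRotate.invRotate.mor₁, (Triangle.mk f g d).invRotate.mor₁,
    comp_distTriang_mor_zero₁₂ _ hT', fun φ h => Triangle.coyoneda_exact₂ _ hT'' φ h⟩

lemma scalar_surj {A : C} (hA : GoodBase k A) (f : A ⟶ A) : ∃ c : k, f = c • 𝟙 A := by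
  have h1 : (𝟙 A) ≠ 0 := by
    intro h
    have : IsZero A := (IsZero.iff_id_eq_zero A).2 h
    have hs : Subsingleton (A ⟶ A) := ⟨fun a b => this.eq_of_src a b⟩
    have := hA.1
    rw [Module.finrank_zero_of_subsingleton] at this
    exact zero_ne_one this
  obtain ⟨c, hc⟩ := (finrank_eq_one_iff_of_nonzero' (𝟙 A) h1).1 hA.1 f
  exact ⟨c, hc.symm⟩

lemma GoodBase.line_zero {A : C} (hA : GoodBase k A) :
    HomIsLine k A ((DerivedCategory.singleFunctor C 0).obj A) := by
  refine ⟨𝟙 _, ?_, fun φ => ?_⟩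
  · intro h
    have h' : 𝟙 A = 0 := (DerivedCategory.singleFunctor C 0).map_injective (by simpa using h)
    have : IsZero A := (IsZero.iff_id_eq_zero A).2 h'
    have hs : Subsingleton (A ⟶ A) := ⟨fun a b => this.eq_of_src a b⟩
    have := hA.1
    rw [Module.finrank_zero_of_subsingleton] at this
    exact zero_ne_one this
  · obtain ⟨f, rfl⟩ := (DerivedCategory.singleFunctor C 0).map_surjective φ
    obtain ⟨c, rfl⟩ := scalar_surj hA f
    exact ⟨c, by simp⟩

lemma scalar_comp_ne {A : C} {Y : DerivedCategory C}
    (e : (DerivedCategory.singleFunctor C 0).obj A ⟶ Y) (he : e ≠ 0) (c : k)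
    (h : (DerivedCategory.singleFunctor C 0).map (c • 𝟙 A) ≫ e = 0) : c = 0 := by
  by_contra hc
  apply he
  have := (DerivedCategory.singleFunctor C 0).map (c⁻¹ • 𝟙 A) ≫= h
  rw [← Category.assoc, ← Functor.map_comp] at this
  simpa [smul_smul, hc] using this

lemma GoodBase.homZero {A : C} (hA : GoodBase k A) (j : ℤ) (h0 : j ≠ 0) (h2 : j ≠ 2) :
    HomZero A (((DerivedCategory.singleFunctor C 0).obj A)⟦j⟧) := by
  intro φ
  by_cases hj : 0 < j
  · obtain ⟨i, rfl⟩ := Int.eq_ofNat_of_zero_le hj.le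
    exact hA.2.2 i (by lia) (by lia) φ
  · exact DerivedCategory.TStructure.t.zero_of_isLE_of_isGE φ 0 (-j) (by lia) inferInstance
      (DerivedCategory.TStructure.t.isGE_shift _ 0 j (-j) (by lia))

/-- The shifted form of the type `A` condition, `m = n + 2` and `Y = X[m]`. -/
def Shape (k : Type*) [Field k] [CategoryTheory.Linear k C]
    (A : C) (m : ℤ) (Y : DerivedCategory C) : Prop :=
  (∀ i : ℤ, -m ≤ i → i ≤ -2 →
    Nonempty ((DerivedCategory.homologyFunctor C i).obj Y ≅ A)) ∧
  (∀ i : ℤ, (i < -m ∨ -2 < i) →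
    IsZero ((DerivedCategory.homologyFunctor C i).obj Y)) ∧
  (∀ j : ℤ, (j = 0 ∨ j = -m) → HomIsLine k A (Y⟦j⟧)) ∧
  (∀ j : ℤ, j ≠ 0 → j ≠ -m → HomZero A (Y⟦j⟧))

noncomputable def homShift (X : DerivedCategory C) (a i i' : ℤ) (h : a + i = i') :
    (DerivedCategory.homologyFunctor C i).obj (X⟦a⟧) ≅
      (DerivedCategory.homologyFunctor C i').obj X :=
  ((DerivedCategory.homologyFunctor C 0).shiftIso a i i' h).app X

noncomputable def addShift (X : DerivedCategory C) (a b c : ℤ) (h : a + b = c) :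
    X⟦c⟧ ≅ X⟦a⟧⟦b⟧ := (shiftFunctorAdd' (DerivedCategory C) a b c h).app X

noncomputable def zeroShift (X : DerivedCategory C) :
    X⟦(0 : ℤ)⟧ ≅ X := (shiftFunctorZero (DerivedCategory C) ℤ).app X

noncomputable def homSingle (A : C) :
    (DerivedCategory.homologyFunctor C 0).obj ((DerivedCategory.singleFunctor C 0).obj A) ≅ A :=
  (DerivedCategory.singleFunctorCompHomologyFunctorIso C 0).app A

lemma isZero_single (A : C) (i : ℤ) (hi : i ≠ 0) :
    IsZero ((DerivedCategory.homologyFunctor C i).obj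
      ((DerivedCategory.singleFunctor C 0).obj A)) := by
  rcases lt_or_gt_of_ne hi with h | h
  · exact DerivedCategory.isZero_of_isGE _ 0 i h
  · exact DerivedCategory.isZero_of_isLE _ 0 i h

lemma shape_base {A : C} (hA : GoodBase k A) :
    Shape k A 2 (((DerivedCategory.singleFunctor C 0).obj A)⟦(2 : ℤ)⟧) := by
  refine ⟨fun i h h' => ?_, fun i h => ?_, fun j h => ?_, fun j h h' => ?_⟩
  · obtain rfl : i = -2 := by lia
    exact ⟨homShift _ 2 (-2) 0 (by simp) ≪≫ homSingle A⟩
  · exact (isZero_single A (2 + i) (by lia)).of_iso (homShift _ 2 i _ rfl)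
  · rcases h with rfl | rfl
    · exact hA.2.1.of_iso (zeroShift _).symm
    · exact hA.line_zero.of_iso ((zeroShift _).symm ≪≫ addShift _ 2 (-2) 0 (by simp))
  · exact (hA.homZero (2 + j) (by lia) (by lia)).of_iso (addShift _ 2 j _ rfl)

/-- The cone of the spanning map `S ⟶ Y` in cohomological form. -/
lemma shape_step {A : C} (hA : GoodBase k A) (m : ℤ) (hm : 2 ≤ m) (Y : DerivedCategory C)
    (hY : Shape k A m Y) : ∃ Y', Shape k A (m + 1) Y' := by
  obtain ⟨hH, hH0, hL, hZ⟩ := hY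
  obtain ⟨e, he, hs⟩ := (hL 0 (Or.inl rfl)).of_iso (zeroShift Y)
  obtain ⟨Z, g, d, hT⟩ := distinguished_cocone_triangle e
  -- Hom computations for `Z`
  have hS1 : ∀ j : ℤ, j + 1 ≠ 0 → j + 1 ≠ 2 → HomZero A (((DerivedCategory.singleFunctor C 0).obj A)⟦(1 : ℤ)⟧⟦j⟧) := fun j h h' =>
    (hA.homZero (1 + j) (by lia) (by lia)).of_iso (addShift _ 1 j _ rfl)
  have hY1 : ∀ j : ℤ, j + 1 ≠ 0 → j + 1 ≠ -m → HomZero A (Y⟦(1 : ℤ)⟧⟦j⟧) := fun j h h' =>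
    (hZ (1 + j) (by lia) (by lia)).of_iso (addShift _ 1 j _ rfl)
  have key0 : ∀ j : ℤ, HomZero A (Y⟦j⟧) → HomZero A (((DerivedCategory.singleFunctor C 0).obj A)⟦(1 : ℤ)⟧⟦j⟧) → HomZero A (Z⟦j⟧) := by
    intro j h h' φ
    obtain ⟨ψ, rfl⟩ := shift_exact₃ hT j φ (h' _)
    have : ψ = 0 := h ψ
    rw [this, zero_comp]
  have hZ0 : HomZero A (Z⟦(0 : ℤ)⟧) := by
    refine HomZero.of_iso (zeroShift Z).symm ?_
    intro φ
    obtain ⟨ψ, rfl⟩ := exact_unshifted hT φ (by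
      refine HomZero.of_iso (zeroShift _) (hS1 0 (by lia) (by lia)) _)
    obtain ⟨c, rfl⟩ := hs ψ
    have : e ≫ g = 0 := comp_distTriang_mor_zero₁₂ _ hT
    rw [Category.assoc, this, comp_zero]
  have hZm1 : HomZero A (Z⟦(-1 : ℤ)⟧) := by
    intro φ
    obtain ⟨u, v, hv, hex⟩ := exact_neg_one hT
    have hf0 : φ ≫ v = 0 := by
      have hfe : (φ ≫ v) ≫ e = 0 := by rw [Category.assoc, hv, comp_zero]
      generalize φ ≫ v = f at hfe
      obtain ⟨f', rfl⟩ := (DerivedCategory.singleFunctor C 0).map_surjective f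
      obtain ⟨c, rfl⟩ := scalar_surj hA f'
      rw [scalar_comp_ne e he c hfe]
      simp
    obtain ⟨ψ, hψ⟩ := hex φ hf0
    have : ψ = 0 := hZ (-1) (by lia) (by lia) ψ
    rw [hψ, this, zero_comp]
  have hZ1 : HomIsLine k A (Z⟦(1 : ℤ)⟧) := by
    have h2 : HomIsLine k A (((DerivedCategory.singleFunctor C 0).obj A)⟦(1 : ℤ)⟧⟦(1 : ℤ)⟧) := hA.2.1.of_iso (addShift _ 1 1 2 (by simp))
    refine h2.of_bij' (d⟦(1 : ℤ)⟧') (fun φ h => ?_) (fun ψ => ?_)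
    · obtain ⟨ψ, rfl⟩ := shift_exact₃ hT 1 φ h
      have : ψ = 0 := hZ 1 (by lia) (by lia) ψ
      rw [this, zero_comp]
    · exact shift_exact₁ hT 1 ψ (hY1 1 (by lia) (by lia) _)
  have hZm : HomIsLine k A (Z⟦-m⟧) := by
    refine (hL (-m) (Or.inr rfl)).of_bij (g⟦-m⟧') (fun φ h => ?_) (fun ψ => ?_)
    · obtain ⟨ψ, rfl⟩ := shift_exact hT (-m) φ h
      have : ψ = 0 := hA.homZero (-m) (by lia) (by lia) ψ
      rw [this, zero_comp]
    · exact shift_exact₃ hT (-m) ψ (hS1 (-m) (by lia) (by lia) _)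
  have hZj : ∀ j : ℤ, j ≠ 1 → j ≠ -m → HomZero A (Z⟦j⟧) := by
    intro j h1 h2
    by_cases h3 : j = 0
    · subst h3; exact hZ0
    by_cases h4 : j = -1
    · subst h4; exact hZm1
    exact key0 j (hZ j h3 h2) (hS1 j (by lia) (by lia))
  -- homology computations
  have hSz : ∀ i : ℤ, i ≠ 0 → IsZero ((DerivedCategory.homologyFunctor C i).obj ((DerivedCategory.singleFunctor C 0).obj A)) :=
    fun i hi => isZero_single A i hi
  have ex2 := DerivedCategory.HomologySequence.exact₂ _ hT
  have ex3 := fun n₀ n₁ h => DerivedCategory.HomologySequence.exact₃ _ hT n₀ n₁ h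
  have ex1 := fun n₀ n₁ h => DerivedCategory.HomologySequence.exact₁ _ hT n₀ n₁ h
  have hHm1 : Nonempty ((DerivedCategory.homologyFunctor C (-1)).obj Z ≅ A) := by
    let δ : (DerivedCategory.homologyFunctor C (-1)).obj Z ⟶
        (DerivedCategory.homologyFunctor C 0).obj ((DerivedCategory.singleFunctor C 0).obj A) :=
      DerivedCategory.HomologySequence.δ (Triangle.mk e g d) (-1) 0 (neg_add_cancel 1)
    have i1 : Mono δ := (ex3 (-1) 0 (by simp)).mono_g ((hH0 (-1) (by lia)).eq_of_src _ _)
    have i2 : Epi δ := (ex1 (-1) 0 (by simp)).epi_f ((hH0 0 (by lia)).eq_of_tgt _ _)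
    have : IsIso δ := isIso_of_mono_of_epi δ
    exact ⟨asIso δ ≪≫ homSingle A⟩
  have hHi : ∀ i : ℤ, i ≠ 0 → i ≠ -1 → Nonempty ((DerivedCategory.homologyFunctor C i).obj Z ≅
      (DerivedCategory.homologyFunctor C i).obj Y) := by
    intro i h0 h1
    have i1 : Mono ((DerivedCategory.homologyFunctor C i).map g) := (ex2 i).mono_g ((hSz i h0).eq_of_src _ _)
    have i2 : Epi ((DerivedCategory.homologyFunctor C i).map g) :=
      (ex3 i (i + 1) rfl).epi_f ((hSz (i + 1) (by lia)).eq_of_tgt _ _)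
    have := isIso_of_mono_of_epi ((DerivedCategory.homologyFunctor C i).map g)
    exact ⟨(asIso ((DerivedCategory.homologyFunctor C i).map g)).symm⟩
  have hH00 : IsZero ((DerivedCategory.homologyFunctor C 0).obj Z) :=
    (ex3 0 1 rfl).isZero_of_both_zeros ((hH0 0 (by lia)).eq_of_src _ _)
      ((hSz 1 (by lia)).eq_of_tgt _ _)
  refine ⟨Z⟦(1 : ℤ)⟧, fun i h h' => ?_, fun i h => ?_, fun j h => ?_, fun j h h' => ?_⟩
  · by_cases hi : i = -2
    · subst hi
      exact ⟨homShift _ 1 (-2) (-1) (by simp) ≪≫ hHm1.some⟩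
    · exact ⟨homShift _ 1 i (1 + i) rfl ≪≫ (hHi (1 + i) (by lia) (by lia)).some ≪≫
        (hH (1 + i) (by lia) (by lia)).some⟩
  · by_cases hi : i = -1
    · subst hi
      exact hH00.of_iso (homShift _ 1 (-1) 0 (by simp))
    · exact (hH0 (1 + i) (by lia)).of_iso (homShift _ 1 i (1 + i) rfl ≪≫
        (hHi (1 + i) (by lia) (by lia)).some)
  · rcases h with rfl | rfl
    · exact hZ1.of_iso (zeroShift _).symm
    · exact hZm.of_iso (addShift _ 1 _ _ (by ring))
  · exact (hZj (1 + j) (by lia) (by lia)).of_iso (addShift _ 1 j _ rfl)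

lemma exists_shape {A : C} (hA : GoodBase k A) (n : ℕ) :
    ∃ Y, Shape k A ((n : ℤ) + 2) Y := by
  induction n with
  | zero => exact ⟨_, by simpa using shape_base hA⟩
  | succ n ih =>
    obtain ⟨Y, hY⟩ := ih
    obtain ⟨Y', hY'⟩ := shape_step hA _ (by lia) Y hY
    refine ⟨Y', ?_⟩
    have : ((n + 1 : ℕ) : ℤ) + 2 = (n : ℤ) + 2 + 1 := by push_cast; ring
    rw [this]
    exact hY'

end Helpers

/-- **Lemma 3.4 (existence part).** If `A` satisfies the hypotheses (3.3), then for every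
`n ∈ ℕ` there exists an object of type `Aₙ` in the derived category of `C`. -/
theorem stmt4 (A : C) (hA : GoodBase k A) (n : ℕ) :
    ∃ X : DerivedCategory C, IsTypeA k A n X := by
  obtain ⟨Y, hH, hH0, hL, hZ⟩ := exists_shape hA n
  refine ⟨Y⟦-((n : ℤ) + 2)⟧, fun i h h' => ?_, fun i h => ?_, fun j h => ?_, fun j h h' => ?_⟩
  · exact ⟨homShift _ _ i _ rfl ≪≫ (hH (-((n : ℤ) + 2) + i) (by lia) (by lia)).some⟩
  · exact (hH0 (-((n : ℤ) + 2) + i) (by lia)).of_iso (homShift _ _ i _ rfl)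
  · exact (hL (-((n : ℤ) + 2) + j) (by lia)).of_iso (addShift _ _ j _ rfl)
  · exact (hZ (-((n : ℤ) + 2) + j) (by lia) (by lia)).of_iso (addShift _ _ j _ rfl)

end ThreeCusps
end

section
/- Let {(n_i, d_i, s_i)}_{i∈I} be a finite family with n_i, d_i ∈ ℕ∖{0} and s_i ∈ ℤ, for each i let X_i be an object of D^b(C) of type A_{n_i}, and set B = ⊕_{i∈I} X_i^{⊕ d_i}[s_i]. Let s = max_{i∈I}(n_i − s_i), which is the maximal degree with H^s(B) ≠ 0, and let J = {i ∈ I : n_i − s_i = s}. The decomposition induces an isomorphism H^s(B) ≅ ⊕_{j∈J} A^{d_j}, and since Hom(A,A) = k·id, the k-algebra End(H^s(B)) identifies with the algebra of block matrices M = (M_{jk})_{j,k∈J}, where M_{jk} is the d_j × d_k matrix over k recording the component from the j-th summand to the k-th summand. Then: (1) every block matrix M with M_{jk} = 0 whenever n_k > n_j is induced, via the functor H^s, by some endomorphism of B; (2) every invertible such block matrix is induced by an automorphism of B. (Lemma 3.5.) -/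
open CategoryTheory Limits

attribute [local instance] CategoryTheory.Abelian.hasFiniteBiproducts

namespace TwHelp
open Pretriangulated

section generic
variable {D : Type*} [Category D] [Preadditive D] [HasZeroObject D] [HasShift D ℤ]
  [∀ n : ℤ, (shiftFunctor D n).Additive] [Pretriangulated D]

/-- Iterated extensions of shifts of `E`, with a top map to `E`. -/
inductive Tw (E : D) : ℕ → (X : D) → (X ⟶ E) → Prop
  | zero (X : D) (t : X ⟶ E) (h : IsIso t) : Tw E 0 X t
  | succ (n : ℕ) (X' : D) (t' : X' ⟶ E) (X : D) (i : X'⟦(1 : ℤ)⟧ ⟶ X) (t : X ⟶ E)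
      (δ : E ⟶ X'⟦(1 : ℤ)⟧⟦(1 : ℤ)⟧) (h' : Tw E n X' t')
      (hT : Triangle.mk i t δ ∈ distTriang D)
      (hδ : δ ≫ t'⟦(1 : ℤ)⟧'⟦(1 : ℤ)⟧' ≠ 0) : Tw E (n + 1) X t

/-- No nonzero maps. -/
def NoHom (E Y : D) : Prop := ∀ φ : E ⟶ Y, φ = 0

lemma NoHom.of_iso {E Y Y' : D} (h : NoHom E Y) (e : Y ≅ Y') : NoHom E Y' := fun φ => by
  have := h (φ ≫ e.inv)
  rw [← cancel_mono e.inv, this, zero_comp]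

/-- Composite of shifts. -/
noncomputable def shAdd (X : D) (a b c : ℤ) (h : a + b = c) : X⟦c⟧ ≅ X⟦a⟧⟦b⟧ :=
  (shiftFunctorAdd' D a b c h).app X

lemma NoHom.shift_middle {E : D} (T : Triangle D) (hT : T ∈ distTriang D) (j : ℤ)
    (h1 : NoHom E (T.obj₁⟦j⟧)) (h3 : NoHom E (T.obj₃⟦j⟧)) : NoHom E (T.obj₂⟦j⟧) := fun φ => by
  have hT' := Triangle.shift_distinguished T hT j
  obtain ⟨g, hg⟩ := Triangle.coyoneda_exact₂ _ hT' φ (h3 _)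
  have hg0 : g = 0 := h1 g
  rw [hg, hg0, zero_comp]; rfl

lemma Tw.noHom {E : D} (h3 : ∀ j : ℤ, 3 ≤ j → NoHom E (E⟦j⟧)) {n : ℕ} {X : D} {t : X ⟶ E}
    (h : Tw E n X t) : ∀ j : ℤ, 3 ≤ j → NoHom E (X⟦j⟧) := by
  induction h with
  | zero X t h => 
    intro j hj
    exact (h3 j hj).of_iso ((shiftFunctor D j).mapIso (asIso t).symm)
  | succ n X' t' X i t δ h' hT hδ ih =>
    intro j hj
    exact NoHom.shift_middle _ hT j
      ((ih (1 + j) (by lia)).of_iso (shAdd X' 1 j (1 + j) rfl)) (h3 j hj)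

lemma Tw.inj {E : D} (h3 : ∀ j : ℤ, 3 ≤ j → NoHom E (E⟦j⟧)) {n : ℕ} {X : D} {t : X ⟶ E}
    (h : Tw E n X t) (φ : E ⟶ X⟦(1 : ℤ)⟧⟦(1 : ℤ)⟧) (hφ : φ ≫ t⟦(1 : ℤ)⟧'⟦(1 : ℤ)⟧' = 0) :
    φ = 0 := by
  cases h with
  | zero _ _ h =>
    rwa [← cancel_mono (t⟦(1 : ℤ)⟧'⟦(1 : ℤ)⟧'), zero_comp]
  | succ n X' t' _ i _ δ h' hT hδ =>
    have hT' := Triangle.shift_distinguished _ (Triangle.shift_distinguished _ hT 1) 1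
    have h0 : NoHom E (X'⟦(1 : ℤ)⟧⟦(1 : ℤ)⟧⟦(1 : ℤ)⟧) :=
      (h'.noHom h3 3 le_rfl).of_iso ((shAdd X' 1 2 3 (by norm_num)) ≪≫ shAdd _ 1 1 2 (by norm_num))
    obtain ⟨g, hg⟩ := Triangle.coyoneda_exact₂ _ hT' φ (by
      change φ ≫ ((1 : ℤ).negOnePow • (shiftFunctor D (1 : ℤ)).map
        ((1 : ℤ).negOnePow • (shiftFunctor D (1 : ℤ)).map t)) = 0
      rw [Int.negOnePow_one, Units.neg_smul, Units.neg_smul, one_smul, one_smul,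
        Functor.map_neg, neg_neg]
      exact hφ)
    have hg0 : g = 0 := h0 g
    rw [hg, hg0, zero_comp]; rfl

lemma Tw.exists_map (k : Type*) [Field k] [Linear k D] {E : D}
    (h3 : ∀ j : ℤ, 3 ≤ j → NoHom E (E⟦j⟧))
    (h2 : ∀ φ ψ : E ⟶ E⟦(1 : ℤ)⟧⟦(1 : ℤ)⟧, φ ≠ 0 → ψ ≠ 0 → ∃ c : k, c ≠ 0 ∧ φ = c • ψ)
    {m : ℕ} {Y : D} {tY : Y ⟶ E} (hY : Tw E m Y tY) :
    ∀ {n : ℕ} {X : D} {tX : X ⟶ E}, Tw E n X tX → m ≤ n →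
      ∃ f : X ⟶ Y, f ≫ tY = tX ∧ (n = m → IsIso f) := by
  induction hY with
  | zero Y tY h =>
    intro n X tX hX hmn
    refine ⟨tX ≫ inv tY, by simp, ?_⟩
    rintro rfl
    cases hX
    infer_instance
  | succ m Y' tY' Y iY tY δY hY' hTY hδY ih =>
    intro n X tX hX hmn
    cases hX with
    | zero => simp at hmn
    | succ n X' tX' _ iX _ δX hX' hTX hδX =>
      obtain ⟨f', hf', hiso⟩ := ih hX' (by lia)
      obtain ⟨c, hc, hceq⟩ := h2 _ _ hδX hδY
      have key : δX ≫ f'⟦(1 : ℤ)⟧'⟦(1 : ℤ)⟧' = c • δY := by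
        rw [← sub_eq_zero]
        apply hY'.inj h3
        rw [Preadditive.sub_comp, Linear.smul_comp, ← hceq, Category.assoc, ← Functor.map_comp,
          ← Functor.map_comp, hf', sub_self]
      have key' : δX ≫ f'⟦(1 : ℤ)⟧'⟦(1 : ℤ)⟧' = (c • 𝟙 E) ≫ δY := by
        rw [key, Linear.smul_comp, Category.id_comp]
      obtain ⟨b, hb1, hb2⟩ := complete_distinguished_triangle_morphism₂ _ _ hTX hTY
        (f'⟦(1 : ℤ)⟧') (c • 𝟙 E) key'
      change X ⟶ Y at b
      change iX ≫ b = _ ≫ iY at hb1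
      change tX ≫ (c • 𝟙 E) = b ≫ tY at hb2
      refine ⟨c⁻¹ • b, ?_, ?_⟩
      · rw [Linear.smul_comp, ← hb2]
        simp [smul_smul, inv_mul_cancel₀ hc]
      · intro hnm
        have := hiso (by lia)
        have hi3 : IsIso (c • 𝟙 E) := ⟨c⁻¹ • 𝟙 E, by simp [smul_smul, inv_mul_cancel₀ hc], by
          simp [smul_smul, mul_inv_cancel₀ hc]⟩
        have hi1 : IsIso (f'⟦(1 : ℤ)⟧') := inferInstance
        have hb : IsIso b := isIso₂_of_isIso₁₃
          (Triangle.homMk (Triangle.mk iX tX δX) (Triangle.mk iY tY δY) (f'⟦(1 : ℤ)⟧') b (c • 𝟙 E)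
            hb1 hb2 key') hTX hTY hi1 hi3
        exact ⟨c • inv b, by simp [smul_smul, mul_inv_cancel₀ hc], by
          simp [smul_smul, inv_mul_cancel₀ hc]⟩

lemma Tw.peel {E : D} {n : ℕ} {X : D} {t : X ⟶ E} (h : Tw E n X t) :
    ∀ m ≤ n, ∃ (Y : D) (tY : Y ⟶ E), Tw E m Y tY := by
  induction h with
  | zero X t h => 
    intro m hm
    obtain rfl : m = 0 := by lia
    exact ⟨X, t, .zero X t h⟩
  | succ n X' t' X i t δ h' hT hδ ih =>
    intro m hm
    by_cases hm' : m = n + 1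
    · subst hm'
      exact ⟨X, t, .succ n X' t' X i t δ h' hT hδ⟩
    · exact ih m (by lia)

lemma Tw.coherent (k : Type*) [Field k] [Linear k D] {E : D}
    (h3 : ∀ j : ℤ, 3 ≤ j → NoHom E (E⟦j⟧))
    (h2 : ∀ φ ψ : E ⟶ E⟦(1 : ℤ)⟧⟦(1 : ℤ)⟧, φ ≠ 0 → ψ ≠ 0 → ∃ c : k, c ≠ 0 ∧ φ = c • ψ)
    {J : Type*} [Finite J] [Nonempty J] (n : J → ℕ) (Z : J → D) (t : ∀ j, Z j ⟶ E)
    (hZ : ∀ j, Tw E (n j) (Z j) (t j)) :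
    ∃ f : ∀ j l, Z j ⟶ Z l, (∀ j l, n l ≤ n j → f j l ≫ t l = t j) ∧ (∀ j, f j j = 𝟙 _) ∧
      ∀ j l m, n l ≤ n j → n m ≤ n l → f j l ≫ f l m = f j m := by
  classical
  obtain ⟨j0, hj0⟩ := Finite.exists_max n
  have hR : ∀ m, ∃ (Y : Over E), Tw E (min m (n j0)) Y.left Y.hom := fun m => by
    obtain ⟨Y, tY, h⟩ := (hZ j0).peel (min m (n j0)) (by lia)
    exact ⟨Over.mk tY, h⟩
  choose R hR using hR
  have hρ : ∀ m, ∃ f : R (m + 1) ⟶ R m, True := fun m => by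
    obtain ⟨f, hf, -⟩ := (hR m).exists_map k h3 h2 (hR (m + 1)) (by lia)
    exact ⟨Over.homMk f hf, trivial⟩
  choose ρ hρ using hρ
  let F := Functor.ofOpSequence ρ
  have he : ∀ j, Nonempty (Over.mk (t j) ≅ F.obj (Opposite.op (n j))) := fun j => by
    have h1 := hR (n j)
    rw [min_eq_left (hj0 j)] at h1
    obtain ⟨f, hf, hi⟩ := h1.exists_map k h3 h2 (hZ j) le_rfl
    have : @IsIso D _ (Over.mk (t j)).left (R (n j)).left f := hi rfl
    exact ⟨Over.isoMk (@asIso D _ (Over.mk (t j)).left (R (n j)).left f this) hf⟩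
  have e := fun j => (he j).some
  let g : ∀ j l, n l ≤ n j → (Over.mk (t j) ⟶ Over.mk (t l)) := fun j l h =>
    (e j).hom ≫ F.map (homOfLE h).op ≫ (e l).inv
  refine ⟨fun j l => if h : n l ≤ n j then (g j l h).left else 0, ?_, ?_, ?_⟩
  · intro j l h
    simp only [h, dite_true]
    exact Over.w (g j l h)
  · intro j
    have : g j j le_rfl = 𝟙 _ := by
      have : (homOfLE (le_refl (n j))).op = 𝟙 (Opposite.op (n j)) := rfl
      simp only [g]
      rw [this, F.map_id]
      simp
    simp [this]
  · intro j l m h h'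
    have h'' := h'.trans h
    simp only [h, h', h'', dite_true]
    rw [← Over.comp_left]
    congr 1
    simp only [g, Category.assoc, Iso.inv_hom_id_assoc]
    rw [← F.map_comp_assoc]
    rfl
end generic

end TwHelp

namespace TwHelp
open Pretriangulated
section derived
variable {C : Type*} [Category C] [Abelian C] [HasDerivedCategory C]
open DerivedCategory

lemma noHom_neg (A : C) (X : DerivedCategory C) (a : ℤ) (ha : 0 < a) [X.IsGE a] :
    NoHom ((singleFunctor C 0).obj A) X := fun φ =>
  TStructure.t.zero_of_isLE_of_isGE φ 0 a ha inferInstance inferInstance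

lemma isGE_shift' (X : DerivedCategory C) (n a m : ℤ) (h : a + m = n) [X.IsGE n] :
    (X⟦a⟧).IsGE m := TStructure.t.isGE_shift X n a m h

lemma isIso_H_mor₁ (T : Triangle (DerivedCategory C)) (hT : T ∈ distTriang _) (i j : ℤ)
    (hij : i + 1 = j)
    (h0 : IsZero ((homologyFunctor C i).obj T.obj₃))
    (h1 : IsZero ((homologyFunctor C j).obj T.obj₃)) :
    IsIso ((homologyFunctor C j).map T.mor₁) := by
  have := (HomologySequence.epi_homologyMap_mor₁_iff T hT j).2 (h1.eq_of_tgt _ _)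
  have := (HomologySequence.mono_homologyMap_mor₁_iff T hT i j hij).2 (h0.eq_of_src _ _)
  exact isIso_of_mono_of_epi _

lemma isIso_H_mor₂ (T : Triangle (DerivedCategory C)) (hT : T ∈ distTriang _) (i j : ℤ)
    (hij : i + 1 = j)
    (h0 : IsZero ((homologyFunctor C i).obj T.obj₁))
    (h1 : IsZero ((homologyFunctor C j).obj T.obj₁)) :
    IsIso ((homologyFunctor C i).map T.mor₂) := by
  have := (HomologySequence.epi_homologyMap_mor₂_iff T hT i j hij).2 (h1.eq_of_tgt _ _)
  have := (HomologySequence.mono_homologyMap_mor₂_iff T hT i).2 (h0.eq_of_src _ _)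
  exact isIso_of_mono_of_epi _

/-- Homology of a shift. -/
noncomputable def hShift (X : DerivedCategory C) (a i j : ℤ) (h : a + i = j) :
    (homologyFunctor C i).obj (X⟦a⟧) ≅ (homologyFunctor C j).obj X :=
  ((homologyFunctor C 0).shiftIso a i j h).app X

lemma hShift_naturality {X Y : DerivedCategory C} (f : X ⟶ Y) (a i j : ℤ) (h : a + i = j) :
    (homologyFunctor C i).map (f⟦a⟧') ≫ (hShift Y a i j h).hom =
      (hShift X a i j h).hom ≫ (homologyFunctor C j).map f :=
  ((homologyFunctor C 0).shiftIso a i j h).hom.naturality f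

lemma exists_iso_single (A : C) (X : DerivedCategory C) [X.IsGE 0] [X.IsLE 0]
    (e : (homologyFunctor C 0).obj X ≅ A) : Nonempty (X ≅ (singleFunctor C 0).obj A) := by
  obtain ⟨Y, ⟨e'⟩⟩ := exists_iso_singleFunctor_obj_of_isGE_of_isLE X 0
  exact ⟨e' ≪≫ (singleFunctor C 0).mapIso
    (((singleFunctorCompHomologyFunctorIso C 0).app Y).symm ≪≫
      ((homologyFunctor C 0).mapIso e').symm ≪≫ e)⟩

lemma tw_of_type (A : C) (hA0 : (𝟙 A) ≠ 0)
    (h3 : ∀ j : ℤ, 3 ≤ j → NoHom ((singleFunctor C 0).obj A) (((singleFunctor C 0).obj A)⟦j⟧))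
    (n : ℕ) : ∀ (X : DerivedCategory C),
    (∀ i : ℤ, -(n : ℤ) ≤ i → i ≤ 0 → Nonempty ((homologyFunctor C i).obj X ≅ A)) →
    (∀ i : ℤ, (i < -(n : ℤ) ∨ 0 < i) → IsZero ((homologyFunctor C i).obj X)) →
    (∀ j : ℤ, -(n : ℤ) < j → j ≤ 0 → NoHom ((singleFunctor C 0).obj A) (X⟦j⟧)) →
    ∃ t : X ⟶ (singleFunctor C 0).obj A, Tw _ n X t ∧ IsIso ((homologyFunctor C 0).map t) := by
  induction n with
  | zero =>
    intro X hX1 hX2 hX3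
    have : X.IsGE 0 := (isGE_iff X 0).2 fun i hi => hX2 i (by left; simpa using hi)
    have : X.IsLE 0 := (isLE_iff X 0).2 fun i hi => hX2 i (by right; exact hi)
    obtain ⟨e⟩ := hX1 0 (by simp) le_rfl
    obtain ⟨e'⟩ := exists_iso_single A X e
    exact ⟨e'.hom, .zero _ _ inferInstance, inferInstance⟩
  | succ n ih =>
    intro X hX1 hX2 hX3
    push_cast at hX1 hX2 hX3
    have hLE : X.IsLE 0 := (isLE_iff X 0).2 fun i hi => hX2 i (by right; exact hi)
    obtain ⟨X', X'', hX', hX'', i0, p, q, hT⟩ :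
        ∃ (X' X'' : DerivedCategory C) (_ : X'.IsLE (-1)) (_ : X''.IsGE 0)
          (i : X' ⟶ X) (p : X ⟶ X'') (q : X'' ⟶ X'⟦(1 : ℤ)⟧),
          Triangle.mk i p q ∈ distTriang _ :=
      ⟨_, _, TStructure.t.isLE_truncLT_obj X 0 (-1), TStructure.t.isGE_truncGE_obj X 0 0, _, _, _,
        TStructure.t.triangleLTGE_distinguished 0 X⟩
    have hX'0 : ∀ i : ℤ, -1 < i → IsZero ((homologyFunctor C i).obj X') :=
      fun i hi => isZero_of_isLE X' (-1) i hi
    have hX''0 : ∀ i : ℤ, i < 0 → IsZero ((homologyFunctor C i).obj X'') :=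
      fun i hi => isZero_of_isGE X'' 0 i hi
    have hiso2 : ∀ i : ℤ, 0 ≤ i → IsIso ((homologyFunctor C i).map p) := fun i hi =>
      isIso_H_mor₂ _ hT i (i + 1) rfl (hX'0 _ (by lia)) (hX'0 _ (by lia))
    have : X''.IsLE 0 := (isLE_iff _ 0).2 fun i hi =>
      (hX2 i (by right; exact hi)).of_iso (by
        have := hiso2 i hi.le
        exact (asIso ((homologyFunctor C i).map p)).symm)
    obtain ⟨e0⟩ := hX1 0 (by lia) le_rfl
    have := hiso2 0 le_rfl
    obtain ⟨eS⟩ := exists_iso_single A X'' ((asIso ((homologyFunctor C 0).map p)).symm ≪≫ e0)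
    let X0 := X'⟦(-1 : ℤ)⟧
    let e1 : X0⟦(1 : ℤ)⟧ ≅ X' := (shiftNegShift X' (1 : ℤ) : X'⟦(-1 : ℤ)⟧⟦(1 : ℤ)⟧ ≅ X')
    let t : X ⟶ (singleFunctor C 0).obj A := p ≫ eS.hom
    let δ : (singleFunctor C 0).obj A ⟶ X0⟦(1 : ℤ)⟧⟦(1 : ℤ)⟧ := eS.inv ≫ q ≫ e1.inv⟦(1 : ℤ)⟧'
    have hT0 : Triangle.mk (e1.hom ≫ i0) t δ ∈ distTriang _ := by
      refine isomorphic_distinguished _ hT _ (Triangle.isoMk _ _ e1 (Iso.refl _) eS.symm ?_ ?_ ?_)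
      · change (e1.hom ≫ i0) ≫ 𝟙 X = e1.hom ≫ i0
        rw [Category.comp_id]
      · change (p ≫ eS.hom) ≫ eS.inv = 𝟙 X ≫ p
        rw [Category.assoc, eS.hom_inv_id, Category.comp_id, Category.id_comp]
      · change (eS.inv ≫ q ≫ e1.inv⟦(1 : ℤ)⟧') ≫ e1.hom⟦(1 : ℤ)⟧' = eS.inv ≫ q
        rw [Category.assoc, Category.assoc, ← CategoryTheory.Functor.map_comp, e1.inv_hom_id,
          CategoryTheory.Functor.map_id, Category.comp_id]
    have hiso1 : ∀ i : ℤ, i < 0 → IsIso ((homologyFunctor C i).map i0) := fun i hi =>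
      isIso_H_mor₁ _ hT (i - 1) i (by lia) (hX''0 _ (by lia)) (hX''0 _ (by lia))
    obtain ⟨t0, ht0, -⟩ := ih X0 (by
        intro i hi hi'
        obtain ⟨e⟩ := hX1 (-1 + i) (by lia) (by lia)
        have := hiso1 (-1 + i) (by lia)
        exact ⟨hShift X' (-1) i (-1 + i) rfl ≪≫ asIso ((homologyFunctor C (-1 + i)).map i0) ≪≫ e⟩)
      (by
        intro i hi
        refine IsZero.of_iso ?_ (hShift X' (-1) i (-1 + i) rfl)
        by_cases hi0 : 0 < i
        · exact hX'0 _ (by lia)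
        · have := hiso1 (-1 + i) (by lia)
          exact (hX2 (-1 + i) (by lia)).of_iso (asIso ((homologyFunctor C (-1 + i)).map i0)))
      (by
        intro j hj hj'
        have key : NoHom ((singleFunctor C 0).obj A) (X'⟦j - 2⟧⟦(1 : ℤ)⟧) := fun φ => by
          have h1 : NoHom ((singleFunctor C 0).obj A) (X⟦j - 2⟧⟦(1 : ℤ)⟧) :=
            (hX3 (j - 1) (by lia) (by lia)).of_iso (shAdd X (j - 2) 1 (j - 1) (by lia))
          have h2 : NoHom ((singleFunctor C 0).obj A) (X''⟦j - 2⟧) := by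
            have := isGE_shift' X'' 0 (j - 2) (-(j - 2)) (by lia)
            exact noHom_neg A _ (-(j - 2)) (by lia)
          obtain ⟨g, hg⟩ := Triangle.coyoneda_exact₁ _
            (Triangle.shift_distinguished _ hT (j - 2)) φ (h1 _)
          have hg0 : g = 0 := h2 g
          rw [hg, hg0, zero_comp]; rfl
        exact key.of_iso ((shAdd X' (j - 2) 1 (j - 1) (by lia)).symm ≪≫
          shAdd X' (-1) j (j - 1) (by lia)))
    refine ⟨t, .succ n X0 t0 X _ t δ ht0 hT0 ?_, ?_⟩
    · intro h
      have hδ := ht0.inj h3 δ h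
      obtain ⟨g, hg⟩ := Triangle.coyoneda_exact₃ _ hT0 (𝟙 ((singleFunctor C 0).obj A)) (by
        change _ ≫ δ = 0
        rw [hδ, comp_zero])
      have h0 : NoHom ((singleFunctor C 0).obj A) X :=
        (hX3 0 (by lia) le_rfl).of_iso ((shiftFunctorZero (DerivedCategory C) ℤ).app X)
      have hg0 : g = 0 := h0 g
      apply hA0
      apply (singleFunctor C 0).map_injective
      rw [CategoryTheory.Functor.map_id, Functor.map_zero, hg, hg0, zero_comp]; rfl
    · simp only [t, Functor.map_comp]
      infer_instance
end derived
end TwHelp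

namespace TwHelp
section final
variable {k : Type*} [Field k] {D : Type*} [Category D] [Preadditive D] [Linear k D]

section mat
variable {K : Type*} [Fintype K] {B : D} {Z : K → D} (a : ∀ x, Z x ⟶ B) (b : ∀ x, B ⟶ Z x)
  (f : ∀ x y, Z x ⟶ Z y)

/-- The endomorphism attached to a matrix. -/
def vM (M : Matrix K K k) : B ⟶ B := ∑ x, ∑ y, M x y • (b x ≫ f x y ≫ a y)

/-- The complementary idempotent. -/
def rr : B ⟶ B := 𝟙 B - ∑ x, b x ≫ a x


lemma a_sum
    (h1 : ∀ x, a x ≫ b x = 𝟙 _) (h0 : ∀ x y, x ≠ y → a x ≫ b y = 0)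
    (y : K) {T : D} (g : ∀ x, Z x ⟶ T) : a y ≫ ∑ x, b x ≫ g x = g y := by
  rw [Preadditive.comp_sum, Finset.sum_eq_single y]
  · rw [← Category.assoc, h1, Category.id_comp]
  · intro x _ hx
    rw [← Category.assoc, h0 _ _ (Ne.symm hx), zero_comp]
  · simp

lemma sum_b
    (h1 : ∀ x, a x ≫ b x = 𝟙 _) (h0 : ∀ x y, x ≠ y → a x ≫ b y = 0)
    (y : K) {T : D} (g : ∀ x, T ⟶ Z x) : (∑ x, g x ≫ a x) ≫ b y = g y := by
  rw [Preadditive.sum_comp, Finset.sum_eq_single y]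
  · rw [Category.assoc, h1, Category.comp_id]
  · intro x _ hx
    rw [Category.assoc, h0 _ _ hx, comp_zero]
  · simp

lemma a_rr
    (h1 : ∀ x, a x ≫ b x = 𝟙 _) (h0 : ∀ x y, x ≠ y → a x ≫ b y = 0)
    (y : K) : a y ≫ rr a b = 0 := by
  rw [rr, Preadditive.comp_sub, a_sum a b h1 h0, Category.comp_id, sub_self]

lemma rr_b
    (h1 : ∀ x, a x ≫ b x = 𝟙 _) (h0 : ∀ x y, x ≠ y → a x ≫ b y = 0)
    (y : K) : rr a b ≫ b y = 0 := by
  rw [rr, Preadditive.sub_comp, sum_b a b h1 h0, Category.id_comp, sub_self]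

lemma a_vM
    (h1 : ∀ x, a x ≫ b x = 𝟙 _) (h0 : ∀ x y, x ≠ y → a x ≫ b y = 0)
    (M : Matrix K K k) (y : K) : a y ≫ vM a b f M = ∑ z, M y z • (f y z ≫ a z) := by
  rw [← a_sum a b h1 h0 y (fun y => ∑ z, M y z • (f y z ≫ a z))]
  congr 1
  simp only [vM, Preadditive.comp_sum, Linear.comp_smul]

lemma rr_vM
    (h1 : ∀ x, a x ≫ b x = 𝟙 _) (h0 : ∀ x y, x ≠ y → a x ≫ b y = 0)
    (M : Matrix K K k) : rr a b ≫ vM a b f M = 0 := by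
  simp only [vM, Preadditive.comp_sum, Linear.comp_smul]
  refine Finset.sum_eq_zero fun x _ => Finset.sum_eq_zero fun y _ => ?_
  rw [← Category.assoc, rr_b a b h1 h0, zero_comp, smul_zero]

lemma vM_rr
    (h1 : ∀ x, a x ≫ b x = 𝟙 _) (h0 : ∀ x y, x ≠ y → a x ≫ b y = 0)
    (M : Matrix K K k) : vM a b f M ≫ rr a b = 0 := by
  simp only [vM, Preadditive.sum_comp, Linear.smul_comp]
  refine Finset.sum_eq_zero fun x _ => Finset.sum_eq_zero fun y _ => ?_
  rw [Category.assoc, Category.assoc, a_rr a b h1 h0, comp_zero, comp_zero, smul_zero]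

lemma rr_rr
    (h1 : ∀ x, a x ≫ b x = 𝟙 _) (h0 : ∀ x y, x ≠ y → a x ≫ b y = 0)
    : rr a b ≫ rr a b = rr a b := by
  conv_lhs => rw [rr, Preadditive.sub_comp, Category.id_comp, Preadditive.sum_comp]
  rw [← rr, Finset.sum_eq_zero, sub_zero]
  intro x _
  rw [Category.assoc, a_rr a b h1 h0, comp_zero]


lemma vM_mul
    (h1 : ∀ x, a x ≫ b x = 𝟙 _) (h0 : ∀ x y, x ≠ y → a x ≫ b y = 0)
    (nn : K → ℕ)
    (hf : ∀ x y z, nn y ≤ nn x → nn z ≤ nn y → f x y ≫ f y z = f x z)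
    (M M' : Matrix K K k) (hM : ∀ x y, nn x < nn y → M x y = 0)
    (hM' : ∀ x y, nn x < nn y → M' x y = 0) :
    vM a b f M ≫ vM a b f M' = vM a b f (M * M') := by
  have key : ∀ x y z, (M x y • M' y z • (f x y ≫ f y z)) = (M x y * M' y z) • f x z := by
    intro x y z
    by_cases hxy : nn x < nn y
    · simp [hM x y hxy]
    by_cases hyz : nn y < nn z
    · simp [hM' y z hyz]
    · rw [hf x y z (by lia) (by lia), smul_smul]
  conv_lhs => rw [vM]
  simp only [Preadditive.sum_comp, Linear.smul_comp, Category.assoc, a_vM a b f h1 h0]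
  rw [vM]
  refine Finset.sum_congr rfl fun x _ => ?_
  simp only [Matrix.mul_apply, Finset.sum_smul]
  rw [Finset.sum_comm]
  refine Finset.sum_congr rfl fun y _ => ?_
  simp only [Preadditive.comp_sum, Linear.comp_smul, Finset.smul_sum]
  refine Finset.sum_congr rfl fun z _ => ?_
  have := congrArg (fun g => b x ≫ g ≫ a z) (key x y z)
  simpa using this

end mat

lemma final_step {C : Type*} [Category C] [Abelian C] [Linear k C] (H : D ⥤ C) [H.Additive]
    (A : C) {K : Type} [Fintype K] [DecidableEq K] {B : D} {Z : K → D}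
    (a : ∀ x, Z x ⟶ B) (b : ∀ x, B ⟶ Z x)
    (f : ∀ x y, Z x ⟶ Z y)
    (h1 : ∀ x, a x ≫ b x = 𝟙 _) (h0 : ∀ x y, x ≠ y → a x ≫ b y = 0)
    (hr : H.map (rr a b) = 0) (nn : K → ℕ) (hf1 : ∀ x, f x x = 𝟙 _)
    (hf : ∀ x y z, nn y ≤ nn x → nn z ≤ nn y → f x y ≫ f y z = f x z)
    (θ : ∀ x, H.obj (Z x) ≅ A)
    (hθ : ∀ (c : k) x y, nn y ≤ nn x → H.map (c • f x y) ≫ (θ y).hom = (θ x).hom ≫ (c • 𝟙 A)) :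
    ∃ ψ : H.obj B ≅ ⨁ (fun _ : K => A), ∀ M : Matrix K K k, (∀ x y, nn x < nn y → M x y = 0) →
      (∃ u : B ⟶ B, ∀ x y, biproduct.ι _ x ≫ ψ.inv ≫ H.map u ≫ ψ.hom ≫ biproduct.π _ y
        = M x y • 𝟙 A) ∧
      (IsUnit M → ∃ u : B ≅ B, ∀ x y,
        biproduct.ι _ x ≫ ψ.inv ≫ H.map u.hom ≫ ψ.hom ≫ biproduct.π _ y = M x y • 𝟙 A) := by
  have hsum : ∑ x, H.map (b x) ≫ H.map (a x) = 𝟙 (H.obj B) := by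
    rw [rr, H.map_sub, sub_eq_zero, H.map_id] at hr
    rw [hr, H.map_sum]
    simp
  let ψ : H.obj B ≅ ⨁ (fun _ : K => A) :=
    { hom := biproduct.lift fun x => H.map (b x) ≫ (θ x).hom
      inv := biproduct.desc fun x => (θ x).inv ≫ H.map (a x)
      hom_inv_id := by
        rw [biproduct.lift_desc, ← hsum]
        simp
      inv_hom_id := by
        ext x y
        simp only [biproduct.ι_desc_assoc, Category.assoc, biproduct.lift_π]
        by_cases hxy : x = y
        · subst hxy
          rw [← H.map_comp_assoc, h1]
          simp
        · rw [← H.map_comp_assoc, h0 _ _ (Ne.symm hxy), Category.id_comp,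
            biproduct.ι_π_ne _ (Ne.symm hxy)]
          simp }
  refine ⟨ψ, fun M hM => ?_⟩
  have main : ∀ (M : Matrix K K k), (∀ x y, nn x < nn y → M x y = 0) → ∀ x y,
      biproduct.ι _ x ≫ ψ.inv ≫ H.map (rr a b + vM a b f M) ≫ ψ.hom ≫ biproduct.π _ y
        = M x y • 𝟙 A := by
    intro M hM x y
    simp only [ψ, biproduct.ι_desc_assoc, Category.assoc, biproduct.lift_π]
    rw [← H.map_comp_assoc, ← H.map_comp_assoc, Preadditive.comp_add, a_rr a b h1 h0, zero_add,
      a_vM a b f h1 h0]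
    simp only [← Linear.smul_comp]
    rw [sum_b a b h1 h0 y (fun z => M x z • f x z)]
    by_cases hxy : nn x < nn y
    · simp [hM x y hxy]
    · rw [hθ _ _ _ (by lia), Iso.inv_hom_id_assoc]
  refine ⟨⟨_, main M hM⟩, fun hu => ?_⟩
  have hMinv : ∀ x y, nn x < nn y → M⁻¹ x y = 0 := by
    have hb : M.BlockTriangular (fun x => OrderDual.toDual (nn x)) := fun x y h => hM x y h
    have : Invertible M := hu.invertible
    intro x y hxy
    exact Matrix.blockTriangular_inv_of_blockTriangular hb hxy
  have hmul : ∀ M M' : Matrix K K k, (∀ x y, nn x < nn y → M x y = 0) →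
      (∀ x y, nn x < nn y → M' x y = 0) → M * M' = 1 →
      (rr a b + vM a b f M) ≫ (rr a b + vM a b f M') = 𝟙 B := by
    intro M M' hM hM' h
    rw [Preadditive.add_comp, Preadditive.comp_add, Preadditive.comp_add, rr_rr a b h1 h0,
      rr_vM a b f h1 h0, vM_rr a b f h1 h0, vM_mul a b f h1 h0 nn hf M M' hM hM', h]
    have : vM a b f (1 : Matrix K K k) = ∑ x, b x ≫ a x := by
      rw [vM]
      refine Finset.sum_congr rfl fun x _ => ?_
      rw [Finset.sum_eq_single x]
      · simp [hf1]
      · intro y _ hy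
        simp [Matrix.one_apply_ne (Ne.symm hy)]
      · simp
    rw [this, rr]
    simp
  have hdet := (Matrix.isUnit_iff_isUnit_det M).1 hu
  exact ⟨⟨_, rr a b + vM a b f M⁻¹, hmul M M⁻¹ hM hMinv (Matrix.mul_nonsing_inv M hdet),
    hmul M⁻¹ M hMinv hM (Matrix.nonsing_inv_mul M hdet)⟩, main M hM⟩
end final
end TwHelp

namespace TwHelp
open ThreeCusps DerivedCategory Pretriangulated
section p4
variable (k : Type*) [Field k]
variable {C : Type*} [Category C] [Abelian C] [CategoryTheory.Linear k C]
  [HasDerivedCategory C]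

lemma good_ne (A : C) (hA : GoodBase k A) : 𝟙 A ≠ 0 := by
  intro h
  have h1 := hA.1
  have : Subsingleton (A ⟶ A) := ⟨fun f g => by
    rw [← Category.id_comp f, ← Category.id_comp g, h, zero_comp, zero_comp]⟩
  rw [Module.finrank_zero_of_subsingleton] at h1
  exact zero_ne_one h1

lemma good_h3 (A : C) (hA : GoodBase k A) (j : ℤ) (hj : 3 ≤ j) :
    NoHom ((singleFunctor C 0).obj A) (((singleFunctor C 0).obj A)⟦j⟧) := by
  obtain ⟨m, rfl⟩ := Int.eq_ofNat_of_zero_le (show 0 ≤ j by lia)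
  exact hA.2.2 m (by lia) (by lia)

lemma S_smul (A : C) (c : k) :
    (singleFunctor C 0).map (c • 𝟙 A) = c • 𝟙 ((singleFunctor C 0).obj A) := by
  rw [CategoryTheory.Functor.map_smul, CategoryTheory.Functor.map_id]

lemma good_h2 (A : C) (hA : GoodBase k A)
    (φ ψ : (singleFunctor C 0).obj A ⟶ ((singleFunctor C 0).obj A)⟦(1 : ℤ)⟧⟦(1 : ℤ)⟧)
    (hφ : φ ≠ 0) (hψ : ψ ≠ 0) : ∃ c : k, c ≠ 0 ∧ φ = c • ψ := by
  obtain ⟨e, _, h⟩ := hA.2.1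
  let i := shAdd ((singleFunctor C 0).obj A) 1 1 2 (by norm_num)
  have key : ∀ φ : (singleFunctor C 0).obj A ⟶ ((singleFunctor C 0).obj A)⟦(1 : ℤ)⟧⟦(1 : ℤ)⟧,
      ∃ c : k, φ = c • (e ≫ i.hom) := by
    intro φ
    obtain ⟨c, hc⟩ := h (φ ≫ i.inv)
    refine ⟨c, ?_⟩
    rw [← cancel_mono i.inv, hc, S_smul]
    simp
  obtain ⟨c, hc⟩ := key φ
  obtain ⟨c', hc'⟩ := key ψ
  have h1 : c ≠ 0 := by rintro rfl; exact hφ (by simp [hc])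
  have h2 : c' ≠ 0 := by rintro rfl; exact hψ (by simp [hc'])
  refine ⟨c * c'⁻¹, by simp [h1, h2], ?_⟩
  rw [hc, hc', smul_smul, mul_assoc, inv_mul_cancel₀ h2, mul_one]

lemma type_tw (A : C) (hA : GoodBase k A) (n : ℕ) (X : DerivedCategory C)
    (hX : IsTypeA k A n X) (s m : ℤ) (h : (n : ℤ) - s = m) :
    ∃ t : X⟦s⟧⟦m⟧ ⟶ (singleFunctor C 0).obj A, Tw _ n (X⟦s⟧⟦m⟧) t ∧
      IsIso ((homologyFunctor C 0).map t) := by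
  have e : ∀ i, (homologyFunctor C i).obj (X⟦s⟧⟦m⟧) ≅ (homologyFunctor C (n + i)).obj X :=
    fun i => hShift (X⟦s⟧) m i (m + i) rfl ≪≫ hShift X s (m + i) (n + i) (by lia)
  refine tw_of_type A (good_ne k A hA) (good_h3 k A hA) n _ ?_ ?_ ?_
  · intro i hi hi'
    obtain ⟨e'⟩ := hX.1 (n + i) (by lia) (by lia)
    exact ⟨e i ≪≫ e'⟩
  · intro i hi
    exact (hX.2.1 (n + i) (by lia)).of_iso (e i)
  · intro j hj hj'
    have : NoHom ((singleFunctor C 0).obj A) (X⟦(n : ℤ) + j⟧) :=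
      hX.2.2.2 _ (by lia) (by lia)
    exact this.of_iso (shAdd X n j _ rfl ≪≫
      (shiftFunctor _ j).mapIso (shAdd X s m n (by lia)))

lemma coherent_maps (A : C) (hA : GoodBase k A) {K : Type} [Finite K] [Nonempty K]
    (nn : K → ℕ) (Y : K → DerivedCategory C) (s : K → ℤ) (m : ℤ) (h : ∀ x, (nn x : ℤ) - s x = m)
    (hY : ∀ x, IsTypeA k A (nn x) (Y x)) :
    ∃ (f : ∀ x y, (Y x)⟦s x⟧ ⟶ (Y y)⟦s y⟧)
      (θ : ∀ x, (homologyFunctor C m).obj ((Y x)⟦s x⟧) ≅ A),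
      (∀ x, f x x = 𝟙 _) ∧
      (∀ x y z, nn y ≤ nn x → nn z ≤ nn y → f x y ≫ f y z = f x z) ∧
      (∀ (c : k) x y, nn y ≤ nn x → (homologyFunctor C m).map (c • f x y) ≫ (θ y).hom =
        (θ x).hom ≫ (c • 𝟙 A)) := by
  choose t ht hiso using fun x => type_tw k A hA (nn x) (Y x) (hY x) (s x) m (h x)
  obtain ⟨f, hf1, hf2, hf3⟩ := Tw.coherent k (good_h3 k A hA) (good_h2 k A hA) nn _ t ht
  let F := shiftFunctor (DerivedCategory C) m
  let σ := (singleFunctorCompHomologyFunctorIso C 0)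
  refine ⟨fun x y => F.preimage (f x y), fun x =>
    (hShift ((Y x)⟦s x⟧) m 0 m (by simp)).symm ≪≫ asIso ((homologyFunctor C 0).map (t x)) ≪≫
      σ.app A, ?_, ?_, ?_⟩
  · intro x
    apply F.map_injective
    rw [F.map_preimage, hf2, F.map_id]
  · intro x y z hxy hyz
    apply F.map_injective
    rw [F.map_comp, F.map_preimage, F.map_preimage, F.map_preimage, hf3 x y z hxy hyz]
  · intro c x y hxy
    have h1 : (F.map (c • F.preimage (f x y))) ≫ t y =
        t x ≫ (singleFunctor C 0).map (c • 𝟙 A) := by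
      rw [CategoryTheory.Functor.map_smul, F.map_preimage, Linear.smul_comp, hf1 x y hxy, S_smul]
      simp
    have h2 := hShift_naturality (c • F.preimage (f x y)) m 0 m (by simp)
    have h3 := σ.hom.naturality (c • 𝟙 A)
    rw [← Iso.inv_comp_eq, ← Category.assoc, ← Iso.eq_comp_inv] at h2
    have h4 := congrArg (homologyFunctor C 0).map h1
    rw [CategoryTheory.Functor.map_comp, CategoryTheory.Functor.map_comp] at h4
    simp only [Iso.trans_hom, Iso.symm_hom, asIso_hom, Category.assoc]
    simp only [← Category.assoc]
    rw [← h2]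
    simp only [Category.assoc]
    congr 1
    have h5 : (homologyFunctor C 0).map (F.map (c • F.preimage (f x y))) ≫
        (homologyFunctor C 0).map (t y) ≫ σ.hom.app A =
        (homologyFunctor C 0).map (t x) ≫ σ.hom.app A ≫ (c • 𝟙 A) := by
      rw [reassoc_of% h4]
      congr 1
    exact h5

section bip
variable {N : ℕ} {d : Fin N → ℕ} {s : Fin N → ℤ} {X : Fin N → DerivedCategory C}
  {B : DerivedCategory C} (e : B ≅ ⨁ (fun i : Fin N => (⨁ (fun _ : Fin (d i) => X i))⟦s i⟧))

/-- Inclusion of a copy of a summand. -/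
noncomputable def bipA (x : Σ i : Fin N, Fin (d i)) : (X x.1)⟦s x.1⟧ ⟶ B :=
  (biproduct.ι (fun _ : Fin (d x.1) => X x.1) x.2)⟦s x.1⟧' ≫
    biproduct.ι (fun i : Fin N => (⨁ (fun _ : Fin (d i) => X i))⟦s i⟧) x.1 ≫ e.inv

/-- Projection to a copy of a summand. -/
noncomputable def bipB (x : Σ i : Fin N, Fin (d i)) : B ⟶ (X x.1)⟦s x.1⟧ :=
  e.hom ≫ biproduct.π (fun i : Fin N => (⨁ (fun _ : Fin (d i) => X i))⟦s i⟧) x.1 ≫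
    (biproduct.π (fun _ : Fin (d x.1) => X x.1) x.2)⟦s x.1⟧'

lemma bip_h1 (x : Σ i : Fin N, Fin (d i)) : bipA e x ≫ bipB e x = 𝟙 _ := by
  simp only [bipA, bipB, Category.assoc, Iso.inv_hom_id_assoc, biproduct.ι_π_self_assoc]
  rw [← CategoryTheory.Functor.map_comp, biproduct.ι_π_self, CategoryTheory.Functor.map_id]

lemma bip_h0 (x y : Σ i : Fin N, Fin (d i)) (h : x ≠ y) : bipA e x ≫ bipB e y = 0 := by
  obtain ⟨i, p⟩ := x
  obtain ⟨j, q⟩ := y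
  simp only [bipA, bipB, Category.assoc, Iso.inv_hom_id_assoc]
  by_cases hij : i = j
  · subst hij
    have hpq : p ≠ q := by rintro rfl; exact h rfl
    simp only [biproduct.ι_π_self_assoc]
    rw [← CategoryTheory.Functor.map_comp, biproduct.ι_π_ne _ hpq,
      CategoryTheory.Functor.map_zero]
  · rw [biproduct.ι_π_ne_assoc _ hij, zero_comp, comp_zero]

lemma bip_sum : ∑ x : (Σ i : Fin N, Fin (d i)), bipB e x ≫ bipA e x = 𝟙 B := by
  rw [Fintype.sum_sigma]
  have : ∀ i : Fin N, ∑ p : Fin (d i), bipB e ⟨i, p⟩ ≫ bipA e ⟨i, p⟩ =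
      e.hom ≫ (biproduct.π (fun i : Fin N => (⨁ (fun _ : Fin (d i) => X i))⟦s i⟧) i ≫
        biproduct.ι (fun i : Fin N => (⨁ (fun _ : Fin (d i) => X i))⟦s i⟧) i) ≫ e.inv := by
    intro i
    have h : ∑ p : Fin (d i), (biproduct.π (fun _ : Fin (d i) => X i) p)⟦s i⟧' ≫
        (biproduct.ι (fun _ : Fin (d i) => X i) p)⟦s i⟧' = 𝟙 _ := by
      simp only [← CategoryTheory.Functor.map_comp]
      rw [← CategoryTheory.Functor.map_sum, biproduct.total, CategoryTheory.Functor.map_id]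
    have h' := congrArg (fun g => e.hom ≫
      biproduct.π (fun i : Fin N => (⨁ (fun _ : Fin (d i) => X i))⟦s i⟧) i ≫ g ≫
        biproduct.ι (fun i : Fin N => (⨁ (fun _ : Fin (d i) => X i))⟦s i⟧) i ≫ e.inv) h
    simp only [Preadditive.sum_comp, Preadditive.comp_sum, Category.assoc,
      Category.id_comp] at h'
    simp only [bipA, bipB, Category.assoc]
    exact h'
  simp only [this]
  rw [← Preadditive.comp_sum, ← Preadditive.sum_comp, biproduct.total]
  simp
end bip
end p4
end TwHelp

namespace ThreeCusps
variable (k : Type*) [Field k]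
variable {C : Type*} [Category C] [Abelian C] [CategoryTheory.Linear k C]
  [HasDerivedCategory C]
/-- **Lemma 3.5.** Let `{(n_i, d_i, s_i)}` be a finite (nonempty) family with
`n_i, d_i ≥ 1` and `s_i ∈ ℤ`, let `X_i` be objects of type `A_{n_i}` and let
`B = ⊕_i X_i^{⊕ d_i}[s_i]`.  Let `s = max_i (n_i - s_i)` and
`J = {i : n_i - s_i = s}`, so that the decomposition induces an isomorphism
`ψ : H^s(B) ≅ ⊕_{j ∈ J} A^{d_j}`.  Since `Hom(A,A) = k·id`, the endomorphisms of
`H^s(B)` identify with block matrices `M = (M_{jk})_{j,k ∈ J}` where `M_{jk}` is a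
`d_j × d_k` matrix over `k` (recording, entrywise, the components between the various
copies of `A`).  Then (1) every block matrix `M` with `M_{jk} = 0` whenever `n_k > n_j`
is induced, via the functor `H^s` and `ψ`, by an endomorphism of `B`, and (2) every
invertible such block matrix is induced by an automorphism of `B`. -/
theorem stmt6 (A : C) (hA : GoodBase k A)
    (N : ℕ) (hN : 0 < N) (n d : Fin N → ℕ) (s : Fin N → ℤ)
    (hn : ∀ i, 1 ≤ n i) (hd : ∀ i, 1 ≤ d i)
    (X : Fin N → DerivedCategory C) (hX : ∀ i, IsTypeA k A (n i) (X i))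
    (B : DerivedCategory C)
    (hB : Nonempty (B ≅ ⨁ (fun i : Fin N => (⨁ (fun _ : Fin (d i) => X i))⟦s i⟧)))
    (smax : ℤ)
    (hmax1 : ∀ i, (n i : ℤ) - s i ≤ smax)
    (hmax2 : ∃ i, (n i : ℤ) - s i = smax) :
    ∃ ψ : (DerivedCategory.homologyFunctor C smax).obj B ≅
        ⨁ (fun _ : (Σ j : {i : Fin N // (n i : ℤ) - s i = smax}, Fin (d j.1)) => A),
      (∀ M : ∀ j₁ j₂ : {i : Fin N // (n i : ℤ) - s i = smax},
          Matrix (Fin (d j₁.1)) (Fin (d j₂.1)) k,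
        (∀ j₁ j₂, n j₂.1 > n j₁.1 → M j₁ j₂ = 0) →
        ∃ u : B ⟶ B,
          ∀ x y : (Σ j : {i : Fin N // (n i : ℤ) - s i = smax}, Fin (d j.1)),
            biproduct.ι _ x ≫ ψ.inv ≫ (DerivedCategory.homologyFunctor C smax).map u ≫
                ψ.hom ≫ biproduct.π _ y
              = M x.1 y.1 x.2 y.2 • 𝟙 A) ∧
      (∀ M : ∀ j₁ j₂ : {i : Fin N // (n i : ℤ) - s i = smax},
          Matrix (Fin (d j₁.1)) (Fin (d j₂.1)) k,
        (∀ j₁ j₂, n j₂.1 > n j₁.1 → M j₁ j₂ = 0) →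
        IsUnit (Matrix.of
          (fun x y : (Σ j : {i : Fin N // (n i : ℤ) - s i = smax}, Fin (d j.1)) =>
            M x.1 y.1 x.2 y.2)) →
        ∃ u : B ≅ B,
          ∀ x y : (Σ j : {i : Fin N // (n i : ℤ) - s i = smax}, Fin (d j.1)),
            biproduct.ι _ x ≫ ψ.inv ≫ (DerivedCategory.homologyFunctor C smax).map u.hom ≫
                ψ.hom ≫ biproduct.π _ y
              = M x.1 y.1 x.2 y.2 • 𝟙 A) := by
  obtain ⟨e⟩ := hB
  obtain ⟨i₀, hi₀⟩ := hmax2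
  let K := (Σ j : {i : Fin N // (n i : ℤ) - s i = smax}, Fin (d j.1))
  have : Nonempty K := ⟨⟨⟨i₀, hi₀⟩, ⟨0, hd i₀⟩⟩⟩
  let emb : K → (Σ i : Fin N, Fin (d i)) := fun x => ⟨x.1.1, x.2⟩
  have hemb : Function.Injective emb := by
    rintro ⟨⟨i, hi⟩, p⟩ ⟨⟨j, hj⟩, q⟩ h
    simp only [emb, Sigma.mk.injEq] at h
    obtain ⟨rfl, h⟩ := h
    rw [eq_of_heq h]
  obtain ⟨f, θ, hf1, hf, hθ⟩ := TwHelp.coherent_maps k A hA (K := K) (fun x => n x.1.1)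
    (fun x => X x.1.1) (fun x => s x.1.1) smax (fun x => x.1.2) (fun x => hX _)
  let H := DerivedCategory.homologyFunctor C smax
  have hr : H.map (TwHelp.rr (fun x : K => TwHelp.bipA e (emb x))
      (fun x : K => TwHelp.bipB e (emb x))) = 0 := by
    rw [TwHelp.rr, H.map_sub, sub_eq_zero, ← TwHelp.bip_sum e, H.map_sum, H.map_sum]
    symm
    refine Finset.sum_of_injOn emb hemb.injOn (by simp) ?_ (fun _ _ => rfl)
    intro x _ hx
    have hz : IsZero (H.obj ((X x.1)⟦s x.1⟧)) := by
      refine ((hX x.1).2.1 (s x.1 + smax) (Or.inr ?_)).of_iso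
        (TwHelp.hShift (X x.1) (s x.1) smax _ rfl)
      have h1 := hmax1 x.1
      have h2 : (n x.1 : ℤ) - s x.1 ≠ smax := by
        intro h
        exact hx ⟨⟨⟨x.1, h⟩, x.2⟩, by simp, rfl⟩
      lia
    rw [H.map_comp, hz.eq_of_tgt (H.map (TwHelp.bipB e x)) 0, zero_comp]
  obtain ⟨ψ, hψ⟩ := TwHelp.final_step (k := k) H A (K := K)
    (fun x => TwHelp.bipA e (emb x)) (fun x => TwHelp.bipB e (emb x)) f
    (fun x => TwHelp.bip_h1 e _) (fun x y hxy => TwHelp.bip_h0 e _ _ (hemb.ne hxy)) hr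
    (fun x => n x.1.1) hf1 hf θ hθ
  refine ⟨ψ, fun M hM => ?_, fun M hM hu => ?_⟩
  · exact (hψ (Matrix.of fun x y : K => M x.1 y.1 x.2 y.2)
      (fun x y h => by simp [hM x.1 y.1 h])).1
  · exact (hψ (Matrix.of fun x y : K => M x.1 y.1 x.2 y.2)
      (fun x y h => by simp [hM x.1 y.1 h])).2 hu

end ThreeCusps
end

section
/- For integers 1 ≤ p ≤ q and nonzero complex numbers α, β, the Kronecker (tensor) product J(α,p) ⊗ J(β,q) of the Jordan blocks, a pq × pq complex matrix, is similar to the block-diagonal matrix with Jordan blocks J(αβ, q−p+2i−1) for i = 1,…,p. Equivalently, the endomorphism of ℂ^p ⊗ ℂ^q given by the tensor product of the two Jordan block endomorphisms is conjugate, by a linear isomorphism ℂ^p ⊗ ℂ^q ≅ ⊕_{i=1}^{p} ℂ^{q−p+2i−1}, to the direct sum of the Jordan block endomorphisms J(αβ, q−p+2i−1). In particular, the eigenvalue-1 Jordan block of size 1 occurs in J(α,p) ⊗ J(β,q) with multiplicity 1 if p = q and αβ = 1, and with multiplicity 0 otherwise. (Lemma 9.3, stated via the correspondence between local systems on the circle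 and their monodromy matrices.) -/
open scoped Kronecker Classical

/-- The `r × r` Jordan block with eigenvalue `α`: `α` on the diagonal, `1` just above the
diagonal, `0` elsewhere. -/
def jordanBlock (α : ℂ) (r : ℕ) : Matrix (Fin r) (Fin r) ℂ :=
  fun i j => if (j : ℕ) = (i : ℕ) then α else if (j : ℕ) = (i : ℕ) + 1 then 1 else 0

open Polynomial in
theorem alt_sum (d M t : ℕ) (h : t < d) :
    ∑ k ∈ Finset.range (d+1), (-1 : ℂ)^(d-k) * (d.choose k : ℂ) * ((M+k).choose t : ℂ) = 0 := by
  have h1 : (X : ℂ[X])^d * (X+1)^M =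
      ∑ k ∈ Finset.range (d+1), C ((-1 : ℂ)^(d-k) * (d.choose k : ℂ)) * (X+1)^(M+k) := by
    have : (X : ℂ[X]) = (X+1) + (-1) := by ring
    conv_lhs => rw [this]
    rw [add_pow]
    rw [Finset.sum_mul]
    refine Finset.sum_congr rfl fun k _ => ?_
    rw [neg_add_cancel_right]
    simp only [map_mul, map_pow, map_neg, map_one, map_natCast, pow_add]
    ring
  have h2 := congrArg (fun P => coeff P t) h1
  simp only [finsetSum_coeff, coeff_C_mul, coeff_X_add_one_pow] at h2
  rw [← h2, coeff_X_pow_mul', if_neg (by omega)]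

theorem prim_vec {A : Type*} [CommRing A] [Algebra ℂ A] (z y : A) (p q d : ℕ) (hd : d < p)
    (hpq : p ≤ q) (hz : z^p = 0) (hy : y^q = 0) :
    ∃ f : A, (∃ a : ℂ, a ≠ 0 ∧ ∃ w : A, f = a • y^d + (z+y) * w) ∧
      (z+y)^(p+q-1-2*d) * f = 0 := by
  obtain ⟨r, rfl⟩ : ∃ r, p = r + d := ⟨p - d, by omega⟩
  obtain ⟨M, rfl⟩ : ∃ M, q = M + 1 + d := ⟨q - 1 - d, by omega⟩
  have hm : r + d + (M + 1 + d) - 1 - 2 * d = M + r := by omega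
  rw [hm]
  let a : ℕ → ℂ := fun k => (-1 : ℂ)^(d-k) * (d.choose k : ℂ) *
    (((M+k).factorial : ℂ) / ((M+k+r).factorial : ℂ))
  refine ⟨∑ k ∈ Finset.range (d+1), a k • ((z+y)^k * y^(d-k)), ⟨a 0, ?_, ?_⟩, ?_⟩
  · simp [a, Nat.factorial_ne_zero]
  · refine ⟨∑ k ∈ Finset.range d, a (k+1) • ((z+y)^k * y^(d-(k+1))), ?_⟩
    rw [Finset.sum_range_succ', add_comm, Finset.mul_sum]
    congr 1
    · simp
    · refine Finset.sum_congr rfl fun k _ => ?_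
      rw [mul_smul_comm]
      congr 1
      ring
  · have h1 : ∀ k ∈ Finset.range (d+1), (z+y)^(M+r) * (a k • ((z+y)^k * y^(d-k))) =
        ∑ j ∈ Finset.range (M+r+d+1),
          (a k * ((M+r+k).choose j : ℂ)) • (z^j * y^(M+r+d-j)) := by
      intro k hk
      have hk' : k ≤ d := by simpa [Nat.lt_succ_iff] using hk
      have h2 : (z+y)^(M+r) * (a k • ((z+y)^k * y^(d-k))) = a k • ((z+y)^(M+r+k) * y^(d-k)) := by
        rw [mul_smul_comm]; congr 1; ring
      rw [h2, add_pow, Finset.sum_mul, Finset.smul_sum]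
      have hsub : Finset.range (M+r+k+1) ⊆ Finset.range (M+r+d+1) := by
        intro x; simp only [Finset.mem_range]; omega
      rw [← Finset.sum_subset hsub]
      · refine Finset.sum_congr rfl fun j hj => ?_
        have hj' : j ≤ M+r+k := by simpa [Nat.lt_succ_iff] using hj
        have : M+r+d-j = (M+r+k-j) + (d-k) := by omega
        rw [this, pow_add, mul_smul (a k)]
        congr 1
        rw [Algebra.smul_def, map_natCast]; ring
      · intro x _ hx
        have : M+r+k < x := by simpa using hx
        rw [Nat.choose_eq_zero_of_lt this]; simp
    rw [Finset.mul_sum, Finset.sum_congr rfl h1, Finset.sum_comm]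
    refine Finset.sum_eq_zero fun j hj => ?_
    have hj' : j ≤ M+r+d := by simpa [Nat.lt_succ_iff] using hj
    rw [← Finset.sum_smul]
    by_cases hjp : r + d ≤ j
    · rw [pow_eq_zero_of_le hjp hz]; simp
    by_cases hjr : j < r
    · rw [pow_eq_zero_of_le (show M+1+d ≤ M+r+d-j by omega) hy]; simp
    obtain ⟨t, rfl⟩ : ∃ t, j = t + r := ⟨j - r, by omega⟩
    have ht : t < d := by omega
    have h3 : ∀ k ∈ Finset.range (d+1), a k * ((M+r+k).choose (t+r) : ℂ) =
        ((-1 : ℂ)^(d-k) * (d.choose k : ℂ) * ((M+k).choose t : ℂ)) *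
          ((t.factorial : ℂ) / ((t+r).factorial : ℂ)) := by
      intro k _
      have key : ((M+k).factorial : ℂ) / ((M+k+r).factorial : ℂ) * ((M+r+k).choose (t+r) : ℂ) =
          ((M+k).choose t : ℂ) * ((t.factorial : ℂ) / ((t+r).factorial : ℂ)) := by
        have e : M + r + k = M + k + r := by ring
        rw [e]
        by_cases hle : t ≤ M + k
        · rw [Nat.cast_choose ℂ hle, Nat.cast_choose ℂ (show t + r ≤ M+k+r by omega)]
          have : M + k + r - (t + r) = M + k - t := by omega
          rw [this]
          have f1 := Nat.cast_ne_zero (R := ℂ) |>.2 (Nat.factorial_ne_zero (M+k+r))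
          have f2 := Nat.cast_ne_zero (R := ℂ) |>.2 (Nat.factorial_ne_zero t)
          have f3 := Nat.cast_ne_zero (R := ℂ) |>.2 (Nat.factorial_ne_zero (t+r))
          have f4 := Nat.cast_ne_zero (R := ℂ) |>.2 (Nat.factorial_ne_zero (M+k-t))
          field_simp
        · rw [Nat.choose_eq_zero_of_lt (show M + k < t by omega),
            Nat.choose_eq_zero_of_lt (show M + k + r < t + r by omega)]
          simp
      simp only [a]
      rw [mul_assoc, key]; ring
    rw [Finset.sum_congr rfl h3, ← Finset.sum_mul, alt_sum d M t ht]
    simp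

/-- `n`-nilpotent Nakayama. -/
theorem nak {A : Type*} [CommRing A] [Algebra ℂ A] (n : A) (W : Submodule ℂ A) (K : ℕ)
    (hn : n^K = 0) (hW : ∀ w ∈ W, n * w ∈ W) (h : ∀ g : A, ∃ w ∈ W, ∃ k, g = w + n * k) :
    W = ⊤ := by
  have step : ∀ j : ℕ, ∀ g : A, ∃ w ∈ W, ∃ k, g = w + n^j * k := by
    intro j
    induction j with
    | zero => intro g; exact ⟨0, W.zero_mem, g, by simp⟩
    | succ j ih =>
      intro g
      obtain ⟨w, hw, k, rfl⟩ := h g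
      obtain ⟨w', hw', k', rfl⟩ := ih k
      exact ⟨w + n * w', W.add_mem hw (hW _ hw'), k', by ring⟩
  rw [eq_top_iff]
  intro g _
  obtain ⟨w, hw, k, rfl⟩ := step K g
  simpa [hn] using hw

theorem chain_basis {A : Type*} [CommRing A] [Algebra ℂ A] [Module.Finite ℂ A]
    (z y u : A) (hu : IsUnit u) (p q : ℕ)
    (hpq : p ≤ q) (hz : z^p = 0) (hy : y^q = 0)
    (hgen : ∀ g : A, ∃ (c : ℂ) (h k : A), g = algebraMap ℂ A c + z * h + y * k)
    (hrank : Module.finrank ℂ A = p * q) :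
    ∃ b : Module.Basis (Σ i : Fin p, Fin (q - p + 2 * (i : ℕ) + 1)) ℂ A,
      ∀ i k, (u * (z+y)) * b ⟨i, k⟩ =
        if hk : 0 < (k : ℕ) then b ⟨i, ⟨k - 1, by omega⟩⟩ else 0 := by
  have hv : ∀ i : Fin p, ∃ f : A, (∃ a : ℂ, a ≠ 0 ∧ ∃ w : A,
      f = a • y^(p-1-(i:ℕ)) + (z+y) * w) ∧ (z+y)^(q - p + 2 * (i : ℕ) + 1) * f = 0 := by
    intro i
    have := prim_vec z y p q (p-1-i) (by omega) hpq hz hy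
    rwa [show p + q - 1 - 2 * (p-1-(i:ℕ)) = q - p + 2 * (i : ℕ) + 1 by omega] at this
  choose v hv1 hv2 using hv
  set n := u * (z+y) with hn
  let f : (Σ i : Fin p, Fin (q - p + 2 * (i : ℕ) + 1)) → A :=
    fun x => n^(q - p + 2 * (x.1 : ℕ) - x.2) * v x.1
  have hf : ∀ i k, n * f ⟨i, k⟩ =
        if hk : 0 < (k : ℕ) then f ⟨i, ⟨k - 1, by omega⟩⟩ else 0 := by
    intro i k
    split_ifs with hk
    · simp only [f]
      rw [← mul_assoc, ← pow_succ']
      congr 2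
      have := k.2
      omega
    · simp only [f]
      rw [← mul_assoc, ← pow_succ']
      rw [show q - p + 2 * (i:ℕ) - k + 1 = q - p + 2 * (i:ℕ) + 1 by omega, hn, mul_pow, mul_assoc,
        hv2, mul_zero]
  have hnil : n^(p+q) = 0 := by
    have h1 : (z+y)^(p+q) = 0 := by
      exact (Commute.all z y).add_pow_eq_zero_of_add_le_succ_of_pow_eq_zero hz hy (by omega)
    rw [hn, mul_pow, h1, mul_zero]
  obtain ⟨ui, hui⟩ := hu.exists_right_inv
  have hs : z + y = n * ui := by rw [hn]; linear_combination -(z+y) * hui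
  let W := Submodule.span ℂ (Set.range f)
  have hvW : ∀ i, v i ∈ W := by
    intro i
    have : f ⟨i, ⟨q - p + 2 * (i:ℕ), by omega⟩⟩ ∈ W := Submodule.subset_span ⟨_, rfl⟩
    simpa [f] using this
  have hWinv : ∀ w ∈ W, n * w ∈ W := by
    intro w hw
    induction hw using Submodule.span_induction with
    | mem x hx =>
      obtain ⟨⟨i, k⟩, rfl⟩ := hx
      rw [hf]
      split_ifs
      · exact Submodule.subset_span ⟨_, rfl⟩
      · exact W.zero_mem
    | zero => simp
    | add a b _ _ ha hb => rw [mul_add]; exact W.add_mem ha hb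
    | smul c a _ ha => rw [mul_smul_comm]; exact W.smul_mem _ ha
  have hdown : ∀ j, j ≤ p → ∀ g : A, ∃ w ∈ W, ∃ k, y^(p-j) * g = w + n * k := by
    intro j
    induction j with
    | zero =>
      intro _ g
      have : (z + y) ∣ y^p := by
        have h1 := sub_dvd_pow_sub_pow y (-z) p
        rw [neg_pow, hz] at h1
        simpa [add_comm] using h1
      obtain ⟨k, hk⟩ := this
      exact ⟨0, W.zero_mem, ui * k * g, by simp only [Nat.sub_zero, hk, hs]; ring⟩
    | succ j ih =>
      intro hj g
      obtain ⟨c, h, k, rfl⟩ := hgen g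
      obtain ⟨a, ha, w, hw⟩ := hv1 ⟨j, by omega⟩
      obtain ⟨w', hw', k', hk'⟩ := ih (by omega) (k - h)
      have e1 : p - j = p - (j+1) + 1 := by omega
      have e2 : p - 1 - j = p - (j+1) := by omega
      simp only [e2] at hw
      rw [e1, pow_succ] at hk'
      refine ⟨(c * a⁻¹) • v ⟨j, by omega⟩ + w', W.add_mem (W.smul_mem _ (hvW _)) hw',
        k' + y^(p-(j+1)) * ui * h - (c * a⁻¹) • (ui * w), ?_⟩
      rw [hw]
      simp only [smul_add, smul_smul, mul_assoc, inv_mul_cancel₀ ha, mul_one]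
      simp only [Algebra.smul_def]
      linear_combination hk' + (y ^ (p - (j + 1)) * h - algebraMap ℂ A (c * a⁻¹) * w) * hs
  have htop : W = ⊤ := by
    refine nak n W _ hnil hWinv fun g => ?_
    obtain ⟨w, hw, k, hk⟩ := hdown p le_rfl g
    exact ⟨w, hw, k, by simpa using hk⟩
  have hcard : Fintype.card (Σ i : Fin p, Fin (q - p + 2 * (i : ℕ) + 1)) =
      Module.finrank ℂ A := by
    rw [hrank, Fintype.card_sigma]
    simp only [Fintype.card_fin]
    rw [Fin.sum_univ_eq_sum_range (fun i => q - p + 2 * i + 1)]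
    obtain ⟨s, rfl⟩ : ∃ s, q = p + s := ⟨q - p, by omega⟩
    simp only [Nat.add_sub_cancel_left]
    have : ∀ P, ∑ i ∈ Finset.range P, (s + 2 * i + 1) = P * (P + s) := by
      intro P
      induction P with
      | zero => simp
      | succ P ih => rw [Finset.sum_range_succ, ih]; ring
    exact this p
  refine ⟨basisOfTopLeSpanOfCardEqFinrank f htop.ge hcard, ?_⟩
  simpa using hf

theorem toMatrix_chain {A : Type*} [CommRing A] [Algebra ℂ A] {ι : Type*} [Fintype ι] [DecidableEq ι]
    (m : ι → ℕ) (b : Module.Basis (Σ i : ι, Fin (m i)) ℂ A) (n : A) (γ : ℂ)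
    (hb : ∀ i k, n * b ⟨i, k⟩ =
        if hk : 0 < (k : ℕ) then b ⟨i, ⟨k - 1, by omega⟩⟩ else 0) :
    LinearMap.toMatrix b b (LinearMap.mulLeft ℂ (algebraMap ℂ A γ + n)) =
      Matrix.blockDiagonal' (fun i => jordanBlock γ (m i)) := by
  ext ⟨i, k⟩ ⟨i', k'⟩
  rw [LinearMap.toMatrix_apply, LinearMap.mulLeft_apply, add_mul, hb, ← Algebra.smul_def]
  rw [map_add, map_smul]
  by_cases hi : i = i'
  · subst hi
    rw [Matrix.blockDiagonal'_apply_eq]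
    split_ifs with hk
    · simp [Finsupp.single_apply, jordanBlock, Fin.ext_iff]
      grind
    · simp [Finsupp.single_apply, jordanBlock, Fin.ext_iff]
      grind
  · rw [Matrix.blockDiagonal'_apply_ne _ _ _ hi]
    split_ifs with hk <;> simp [Ne.symm hi]

open Polynomial in
theorem trunc_nil (p : ℕ) : AdjoinRoot.root (X^p : ℂ[X]) ^ p = 0 := by
  have h := AdjoinRoot.mk_self (f := (X^p : ℂ[X]))
  rwa [map_pow, AdjoinRoot.mk_X] at h

open Polynomial in
theorem trunc (α : ℂ) (p : ℕ) :
    ∃ (b : Module.Basis (Fin p) ℂ (AdjoinRoot (X^p : ℂ[X]))),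
      LinearMap.toMatrix b b (LinearMap.mulLeft ℂ (algebraMap ℂ _ α + AdjoinRoot.root _)) =
        jordanBlock α p := by
  have hmon : (X^p : ℂ[X]).Monic := monic_X_pow p
  have hdim : (AdjoinRoot.powerBasis' hmon).dim = p := by simp
  let b := (AdjoinRoot.powerBasis' hmon).basis.reindex ((finCongr hdim).trans Fin.revPerm)
  have hbk : ∀ k, b k = AdjoinRoot.root (X^p : ℂ[X]) ^ (p - 1 - (k:ℕ)) := by
    intro k
    simp [b, Fin.val_rev]
    congr 1; omega
  have hx := trunc_nil p
  have hb : ∀ k : Fin p, AdjoinRoot.root (X^p : ℂ[X]) * b k =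
      if hk : 0 < (k : ℕ) then b ⟨k - 1, by omega⟩ else 0 := by
    intro k
    rw [hbk, ← pow_succ']
    split_ifs with h
    · rw [hbk]; congr 1; simp only []; omega
    · rw [show p - 1 - (k:ℕ) + 1 = p by omega, hx]
  refine ⟨b, ?_⟩
  ext k k'
  rw [LinearMap.toMatrix_apply, LinearMap.mulLeft_apply, add_mul, hb, ← Algebra.smul_def]
  rw [map_add, map_smul]
  split_ifs with hk
  · simp [Finsupp.single_apply, jordanBlock, Fin.ext_iff]
    grind
  · simp [Finsupp.single_apply, jordanBlock, Fin.ext_iff]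
    grind

open Polynomial in
theorem trunc_gen (p : ℕ) (g : AdjoinRoot (X^p : ℂ[X])) :
    ∃ (c : ℂ) (h : AdjoinRoot (X^p : ℂ[X])),
      g = algebraMap ℂ _ c + AdjoinRoot.root _ * h := by
  obtain ⟨P, rfl⟩ := AdjoinRoot.mk_surjective g
  refine ⟨P.coeff 0, AdjoinRoot.mk _ P.divX, ?_⟩
  conv_lhs => rw [← X_mul_divX_add P]
  simp only [map_add, map_mul, AdjoinRoot.mk_X, AdjoinRoot.mk_C]
  rw [add_comm]; rfl

open TensorProduct in
theorem main_abs {B C' : Type*} [CommRing B] [CommRing C'] [Algebra ℂ B] [Algebra ℂ C']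
    [Module.Finite ℂ B] [Module.Finite ℂ C'] (p q : ℕ) (hpq : p ≤ q)
    (α β : ℂ) (hα : α ≠ 0) (hβ : β ≠ 0) (b1 : Module.Basis (Fin p) ℂ B)
    (b2 : Module.Basis (Fin q) ℂ C') (x0 : B) (y0 : C') (hx0 : x0 ^ p = 0) (hy0 : y0 ^ q = 0)
    (hb1 : LinearMap.toMatrix b1 b1 (LinearMap.mulLeft ℂ (algebraMap ℂ B α + x0)) =
      jordanBlock α p)
    (hb2 : LinearMap.toMatrix b2 b2 (LinearMap.mulLeft ℂ (algebraMap ℂ C' β + y0)) =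
      jordanBlock β q)
    (hg1 : ∀ g : B, ∃ (c : ℂ) (h : B), g = algebraMap ℂ _ c + x0 * h)
    (hg2 : ∀ g : C', ∃ (c : ℂ) (h : C'), g = algebraMap ℂ _ c + y0 * h) :
    (∃ (e : (Fin p × Fin q) ≃ (Σ i : Fin p, Fin (q - p + 2 * (i : ℕ) + 1)))
        (P : Matrix (Fin p × Fin q) (Fin p × Fin q) ℂ) (_ : Invertible P),
      jordanBlock α p ⊗ₖ jordanBlock β q =
        P * (Matrix.reindex e.symm e.symm
          (Matrix.blockDiagonal'
            (fun i : Fin p => jordanBlock (α * β) (q - p + 2 * (i : ℕ) + 1)))) * ⅟P) := by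
  let x : B ⊗[ℂ] C' := x0 ⊗ₜ 1
  let y : B ⊗[ℂ] C' := 1 ⊗ₜ y0
  have hx : x^p = 0 := by simp [x, Algebra.TensorProduct.tmul_pow, hx0]
  have hy : y^q = 0 := by simp [y, Algebra.TensorProduct.tmul_pow, hy0]
  let bt : Module.Basis (Fin p × Fin q) ℂ (B ⊗[ℂ] C') := b1.tensorProduct b2
  have hrank : Module.finrank ℂ (B ⊗[ℂ] C') = p * q := by
    rw [Module.finrank_eq_card_basis bt]; simp
  let u : B ⊗[ℂ] C' := algebraMap ℂ (B ⊗[ℂ] C') α + x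
  have hu : IsUnit u := by
    have h1 : IsNilpotent x := ⟨p, hx⟩
    have h2 : IsUnit (algebraMap ℂ (B ⊗[ℂ] C') α) := (IsUnit.mk0 α hα).map _
    exact h1.isUnit_add_left_of_commute h2 (Commute.all _ _)
  obtain ⟨ui, hui⟩ := hu.exists_right_inv
  let z : B ⊗[ℂ] C' := algebraMap ℂ (B ⊗[ℂ] C') β * x * ui
  have hz : z^p = 0 := by simp [z, mul_pow, hx]
  have hxz : x = z * (algebraMap ℂ (B ⊗[ℂ] C') β⁻¹ * u) := by
    have : algebraMap ℂ (B ⊗[ℂ] C') β * algebraMap ℂ (B ⊗[ℂ] C') β⁻¹ = 1 := by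
      rw [← map_mul, mul_inv_cancel₀ hβ, map_one]
    simp only [z]
    linear_combination (-x) * hui - x * ui * u * this
  have hgen : ∀ g : B ⊗[ℂ] C', ∃ (c : ℂ) (h k : B ⊗[ℂ] C'), g = algebraMap ℂ (B ⊗[ℂ] C') c + z * h + y * k := by
    intro g
    induction g using TensorProduct.induction_on with
    | zero => exact ⟨0, 0, 0, by simp⟩
    | add a b ha hb =>
      obtain ⟨c, h, k, rfl⟩ := ha
      obtain ⟨c', h', k', rfl⟩ := hb
      exact ⟨c + c', h + h', k + k', by rw [map_add]; ring⟩
    | tmul a b =>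
      obtain ⟨c, h, rfl⟩ := hg1 a
      obtain ⟨c', h', rfl⟩ := hg2 b
      let H : B ⊗[ℂ] C' := h ⊗ₜ 1
      let H' : B ⊗[ℂ] C' := 1 ⊗ₜ h'
      have e : ((algebraMap ℂ B c + x0 * h) ⊗ₜ[ℂ] (algebraMap ℂ C' c' + y0 * h') : B ⊗[ℂ] C') =
          (algebraMap ℂ (B ⊗[ℂ] C') c + x * H) * (algebraMap ℂ (B ⊗[ℂ] C') c' + y * H') := by
        have e1 : algebraMap ℂ (B ⊗[ℂ] C') c + x * H = (algebraMap ℂ B c + x0 * h) ⊗ₜ 1 := by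
          simp [x, H, TensorProduct.add_tmul, Algebra.TensorProduct.algebraMap_apply]
        have e2 : algebraMap ℂ (B ⊗[ℂ] C') c' + y * H' = 1 ⊗ₜ (algebraMap ℂ C' c' + y0 * h') := by
          rw [Algebra.TensorProduct.algebraMap_apply']
          simp [y, H', TensorProduct.tmul_add]
        rw [e1, e2]; simp
      refine ⟨c * c', (algebraMap ℂ (B ⊗[ℂ] C') β⁻¹ * u) * H * (algebraMap ℂ (B ⊗[ℂ] C') c' + y * H'),
        algebraMap ℂ (B ⊗[ℂ] C') c * H', ?_⟩
      refine e.trans ?_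
      rw [map_mul]
      linear_combination (H * (algebraMap ℂ (B ⊗[ℂ] C') c' + y * H')) * hxz
  obtain ⟨b, hb⟩ := chain_basis z y u hu p q hpq hz hy hgen hrank
  have hJ := toMatrix_chain _ b _ (α * β) hb
  have hmul : LinearMap.mulLeft ℂ (algebraMap ℂ (B ⊗[ℂ] C') (α*β) + u * (z+y)) =
      TensorProduct.map (LinearMap.mulLeft ℂ (algebraMap ℂ B α + x0))
        (LinearMap.mulLeft ℂ (algebraMap ℂ C' β + y0)) := by
    have e : algebraMap ℂ (B ⊗[ℂ] C') (α*β) + u * (z+y) =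
        (algebraMap ℂ B α + x0) ⊗ₜ (algebraMap ℂ C' β + y0) := by
      have e1 : algebraMap ℂ (B ⊗[ℂ] C') α + x = (algebraMap ℂ B α + x0) ⊗ₜ 1 := by
        simp [x, TensorProduct.add_tmul, Algebra.TensorProduct.algebraMap_apply]
      have e2 : algebraMap ℂ (B ⊗[ℂ] C') β + y = 1 ⊗ₜ (algebraMap ℂ C' β + y0) := by
        rw [Algebra.TensorProduct.algebraMap_apply']
        simp [y, TensorProduct.tmul_add]
      have e3 : algebraMap ℂ (B ⊗[ℂ] C') (α*β) + u * (z+y) =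
          (algebraMap ℂ (B ⊗[ℂ] C') α + x) * (algebraMap ℂ (B ⊗[ℂ] C') β + y) := by
        rw [map_mul]
        simp only [z]
        have hu' : u = algebraMap ℂ (B ⊗[ℂ] C') α + x := rfl
        linear_combination (algebraMap ℂ (B ⊗[ℂ] C') β * x) * hui + y * hu'
      rw [e3, e1, e2]; simp
    rw [e]
    ext a c
    simp
  have hK : LinearMap.toMatrix bt bt (LinearMap.mulLeft ℂ (algebraMap ℂ (B ⊗[ℂ] C') (α*β) + u * (z+y))) =
      jordanBlock α p ⊗ₖ jordanBlock β q := by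
    rw [hmul, TensorProduct.toMatrix_map, hb1, hb2]
  let e := bt.indexEquiv b
  let b' := b.reindex e.symm
  have hJ' : LinearMap.toMatrix b' b' (LinearMap.mulLeft ℂ (algebraMap ℂ (B ⊗[ℂ] C') (α*β) + u * (z+y))) =
      Matrix.reindex e.symm e.symm (Matrix.blockDiagonal'
            (fun i : Fin p => jordanBlock (α * β) (q - p + 2 * (i : ℕ) + 1))) := by
    rw [← hJ]
    generalize LinearMap.mulLeft ℂ (algebraMap ℂ (B ⊗[ℂ] C') (α*β) + u * (z+y)) = T
    ext i j
    simp [LinearMap.toMatrix_apply, b']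
  let iP : Invertible (bt.toMatrix b') := bt.invertibleToMatrix b'
  refine ⟨e, bt.toMatrix b', iP, ?_⟩
  have hinv : ⅟(bt.toMatrix b') = b'.toMatrix bt := by
    apply invOf_eq_right_inv
    exact bt.toMatrix_mul_toMatrix_flip b'
  rw [hinv, ← hK, ← hJ']
  exact (basis_toMatrix_mul_linearMap_toMatrix_mul_basis_toMatrix bt b' bt b' _).symm
theorem main_part (p q : ℕ) (hpq : p ≤ q)
    (α β : ℂ) (hα : α ≠ 0) (hβ : β ≠ 0) :
    (∃ (e : (Fin p × Fin q) ≃ (Σ i : Fin p, Fin (q - p + 2 * (i : ℕ) + 1)))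
        (P : Matrix (Fin p × Fin q) (Fin p × Fin q) ℂ) (_ : Invertible P),
      jordanBlock α p ⊗ₖ jordanBlock β q =
        P * (Matrix.reindex e.symm e.symm
          (Matrix.blockDiagonal'
            (fun i : Fin p => jordanBlock (α * β) (q - p + 2 * (i : ℕ) + 1)))) * ⅟P) := by
  obtain ⟨b1, hb1⟩ := trunc α p
  obtain ⟨b2, hb2⟩ := trunc β q
  have := Module.Finite.of_basis b1
  have := Module.Finite.of_basis b2
  exact main_abs p q hpq α β hα hβ b1 b2 _ _ (trunc_nil p) (trunc_nil q) hb1 hb2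
    (trunc_gen p) (trunc_gen q)

/-- **Lemma 9.3.** For integers `1 ≤ p ≤ q` and nonzero complex numbers `α`, `β`, the
Kronecker (tensor) product `J(α,p) ⊗ J(β,q)` of Jordan blocks is similar to the
block-diagonal matrix with Jordan blocks `J(αβ, q - p + 2i - 1)` for `i = 1, …, p`
(below, `i : Fin p` runs over `0, …, p-1`, and the `i`-th block has size
`q - p + 2i + 1 = q - p + 2(i+1) - 1`).  In particular, the eigenvalue-`1` Jordan block
of size `1` occurs in this decomposition with multiplicity `1` if `p = q` and `αβ = 1`,
and with multiplicity `0` otherwise. -/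
theorem three_cusps_stmt7 (p q : ℕ) (hp : 1 ≤ p) (hpq : p ≤ q)
    (α β : ℂ) (hα : α ≠ 0) (hβ : β ≠ 0) :
    (∃ (e : (Fin p × Fin q) ≃ (Σ i : Fin p, Fin (q - p + 2 * (i : ℕ) + 1)))
        (P : Matrix (Fin p × Fin q) (Fin p × Fin q) ℂ) (_ : Invertible P),
      jordanBlock α p ⊗ₖ jordanBlock β q =
        P * (Matrix.reindex e.symm e.symm
          (Matrix.blockDiagonal'
            (fun i : Fin p => jordanBlock (α * β) (q - p + 2 * (i : ℕ) + 1)))) * ⅟P) ∧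
    Multiset.count ((1 : ℂ), (1 : ℕ))
        (Multiset.map (fun i : Fin p => (α * β, q - p + 2 * (i : ℕ) + 1))
          (Finset.univ.val)) =
      (if p = q ∧ α * β = 1 then 1 else 0) := by
  refine ⟨main_part p q hpq α β hα hβ, ?_⟩
  rw [Multiset.count_map]
  split_ifs with h
  · obtain ⟨rfl, h1⟩ := h
    have : Multiset.filter (fun a : Fin p => ((1 : ℂ), (1 : ℕ)) =
        (α * β, p - p + 2 * (a : ℕ) + 1)) Finset.univ.val = {(⟨0, hp⟩ : Fin p)} := by
      have h2 : Finset.filter (fun a : Fin p => ((1 : ℂ), (1 : ℕ)) =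
        (α * β, p - p + 2 * (a : ℕ) + 1)) Finset.univ = {(⟨0, hp⟩ : Fin p)} := by
        ext a
        simp [h1, Fin.ext_iff]
      exact congrArg Finset.val h2
    rw [this]; simp
  · rw [Multiset.card_eq_zero, Multiset.filter_eq_nil]
    intro a _ ha
    rw [Prod.mk.injEq] at ha
    exact h ⟨by omega, ha.1.symm⟩
end

section
/- Let C be an abelian category and X an object of its bounded derived category D^b(C) such that Ext^k(H^i(X), H^j(X)) = 0 for all i, j ∈ ℤ and all k ≥ 2. Then X is split: there is an isomorphism X ≅ ⊕_{i∈ℤ} H^i(X)[−i] in D^b(C). (Lemma 3.1.) -/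
open CategoryTheory Limits

section Helpers
open DerivedCategory Pretriangulated Triangulated

variable {C : Type*} [Category C] [Abelian C] [HasDerivedCategory C]

lemma aux_isIso_mor₂ (T : Triangle (DerivedCategory C)) (hT : T ∈ distTriang _) (n : ℤ)
    (h₀ : IsZero ((homologyFunctor C n).obj T.obj₁))
    (h₁ : IsZero ((homologyFunctor C (n + 1)).obj T.obj₁)) :
    IsIso ((homologyFunctor C n).map T.mor₂) := by
  have : Mono ((homologyFunctor C n).map T.mor₂) :=
    (HomologySequence.mono_homologyMap_mor₂_iff T hT n).2 (h₀.eq_of_src _ _)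
  have : Epi ((homologyFunctor C n).map T.mor₂) :=
    (HomologySequence.epi_homologyMap_mor₂_iff T hT n (n + 1) rfl).2 (h₁.eq_of_tgt _ _)
  exact isIso_of_mono_of_epi _

lemma aux_isIso_mor₁ (T : Triangle (DerivedCategory C)) (hT : T ∈ distTriang _) (n : ℤ)
    (h₀ : IsZero ((homologyFunctor C (n - 1)).obj T.obj₃))
    (h₁ : IsZero ((homologyFunctor C n).obj T.obj₃)) :
    IsIso ((homologyFunctor C n).map T.mor₁) := by
  have : Mono ((homologyFunctor C n).map T.mor₁) :=
    (HomologySequence.mono_homologyMap_mor₁_iff T hT (n - 1) n (by lia)).2 (h₀.eq_of_src _ _)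
  have : Epi ((homologyFunctor C n).map T.mor₁) :=
    (HomologySequence.epi_homologyMap_mor₁_iff T hT n).2 (h₁.eq_of_tgt _ _)
  exact isIso_of_mono_of_epi _

/-- Truncation triangles with control of the cohomology. -/
lemma aux_trunc (X : DerivedCategory C) (n : ℤ) :
    ∃ (Y V : DerivedCategory C) (f : Y ⟶ X) (g : X ⟶ V) (h : V ⟶ Y⟦(1 : ℤ)⟧),
      Triangle.mk f g h ∈ distTriang _ ∧ Y.IsLE n ∧ V.IsGE (n + 1) ∧
      (∀ i ≤ n, IsIso ((homologyFunctor C i).map f)) ∧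
      (∀ i, n < i → IsIso ((homologyFunctor C i).map g)) := by
  obtain ⟨Y, V, hY, hV, f, g, h, hT⟩ := TStructure.t.exists_triangle X n (n + 1) rfl
  have hY' : Y.IsLE n := ⟨hY⟩
  have hV' : V.IsGE (n + 1) := ⟨hV⟩
  refine ⟨Y, V, f, g, h, hT, hY', hV', fun i hi ↦ ?_, fun i hi ↦ ?_⟩
  · exact aux_isIso_mor₁ _ hT i (V.isZero_of_isGE (n + 1) (i - 1) (by lia))
      (V.isZero_of_isGE (n + 1) i (by lia))
  · exact aux_isIso_mor₂ _ hT i (Y.isZero_of_isLE n i (by lia))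
      (Y.isZero_of_isLE n (i + 1) (by lia))

lemma aux_single (W : DerivedCategory C) (n : ℤ) [W.IsGE n] [W.IsLE n] :
    Nonempty (W ≅ (singleFunctor C n).obj ((homologyFunctor C n).obj W)) := by
  obtain ⟨Y, ⟨e⟩⟩ := exists_iso_singleFunctor_obj_of_isGE_of_isLE W n
  exact ⟨e ≪≫ (singleFunctor C n).mapIso
    (((homologyFunctor C n).mapIso e ≪≫ (singleFunctorCompHomologyFunctorIso C n).app Y).symm)⟩

/-- Dévissage for the vanishing of morphisms. -/
lemma aux_vanish (A : DerivedCategory C) (a : ℤ) (n : ℕ) :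
    ∀ (Z : DerivedCategory C) (_ : Z.IsGE a) (_ : Z.IsLE (a + n - 1))
      (_ : ∀ (j : ℤ) (φ : A ⟶ (singleFunctor C j).obj ((homologyFunctor C j).obj Z)), φ = 0)
      (f : A ⟶ Z), f = 0 := by
  induction n with
  | zero =>
    intro Z h1 h2 _ f
    exact (TStructure.t.isZero Z (a + (0 : ℕ) - 1) a (by simp)).eq_of_tgt _ _
  | succ n ih =>
    intro Z h1 h2 H f
    obtain ⟨Y, V, u, v, w, hT, hY, hV, hu, hv⟩ := aux_trunc Z (a + n - 1)
    have hY1 : Y.IsGE a := by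
      rw [isGE_iff]
      intro i hi
      by_cases hin : i ≤ a + n - 1
      · have := hu i hin
        exact (Z.isZero_of_isGE a i hi).of_iso (asIso ((homologyFunctor C i).map u))
      · exact Y.isZero_of_isLE (a + n - 1) i (by lia)
    have hV0 : V.IsGE (a + n) := by simpa using hV
    have hV1 : V.IsLE (a + n) := by
      rw [isLE_iff]
      intro i hi
      have := hv i (by lia)
      exact (Z.isZero_of_isLE (a + (n + 1 : ℕ) - 1) i (by push_cast; lia)).of_iso
        (asIso ((homologyFunctor C i).map v)).symm
    obtain ⟨e⟩ := aux_single V (a + n)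
    have := hv (a + n) (by lia)
    have hfv : f ≫ v = 0 := by
      let e' := e ≪≫ (singleFunctor C (a + n)).mapIso
        (asIso ((homologyFunctor C (a + n)).map v)).symm
      rw [← cancel_mono e'.hom, zero_comp]
      exact H _ _
    obtain ⟨f', rfl⟩ := (show ∃ f' : A ⟶ Y, f = f' ≫ u from
      Triangle.coyoneda_exact₂ _ hT f hfv)
    rw [ih Y hY1 hY ?_ f', zero_comp]
    intro j φ
    by_cases hj : j ≤ a + n - 1
    · have := hu j hj
      let e' := (singleFunctor C j).mapIso (asIso ((homologyFunctor C j).map u))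
      rw [← cancel_mono e'.hom, zero_comp]
      exact H _ _
    · exact ((singleFunctor C j).map_isZero
        (Y.isZero_of_isLE (a + n - 1) j (by lia))).eq_of_tgt _ _

lemma aux_shift_zero {D : Type*} [Category D] [Preadditive D] [HasShift D ℤ]
    [∀ n : ℤ, (shiftFunctor D n).Additive] (A B : D) (i j k : ℤ) (hk : k = i - j)
    (h : ∀ φ : A ⟶ B⟦k⟧, φ = 0) (f : A⟦-i⟧ ⟶ B⟦-j⟧) : f = 0 := by
  apply (shiftFunctor D i).map_injective
  rw [Functor.map_zero]
  let e₁ : A⟦-i⟧⟦i⟧ ≅ A := (shiftFunctorCompIsoId D (-i) i (by lia)).app A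
  let e₂ : B⟦k⟧ ≅ B⟦-j⟧⟦i⟧ := (shiftFunctorAdd' D (-j) i k (by lia)).app B
  rw [← cancel_epi e₁.inv, ← cancel_mono e₂.inv]
  simpa using h (e₁.inv ≫ f⟦i⟧' ≫ e₂.inv)

noncomputable def auxS (M : C) (i : ℤ) :
    ((singleFunctor C 0).obj M)⟦-i⟧ ≅ (singleFunctor C i).obj M :=
  ((singleFunctors C).shiftIso (-i) i 0 (by lia)).app M

lemma aux_map (X : DerivedCategory C) (a b : ℤ) (ha : X.IsGE a)
    (hext : ∀ (i j : ℤ) (k : ℕ), 2 ≤ k →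
      ∀ φ : (singleFunctor C 0).obj ((homologyFunctor C i).obj X) ⟶
            ((singleFunctor C 0).obj ((homologyFunctor C j).obj X))⟦(k : ℤ)⟧, φ = 0) (i : ℤ) :
    ∃ g : ((singleFunctor C 0).obj ((homologyFunctor C i).obj X))⟦-i⟧ ⟶ X,
      IsIso ((homologyFunctor C i).map g) := by
  obtain ⟨Y, V, f, -, -, -, hY, -, hf, -⟩ := aux_trunc X i
  obtain ⟨Z, W, u, v, w, hT, hZ, hW, hu, hv⟩ := aux_trunc Y (i - 1)
  have hW0 : W.IsGE i := by simpa using hW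
  have hW1 : W.IsLE i := by
    rw [isLE_iff]
    intro j hj
    have := hv j (by lia)
    exact (Y.isZero_of_isLE i j hj).of_iso (asIso ((homologyFunctor C j).map v)).symm
  obtain ⟨e⟩ := aux_single W i
  have := hv i (by lia)
  have := hf i le_rfl
  let E : ((singleFunctor C 0).obj ((homologyFunctor C i).obj X))⟦-i⟧ ≅ W :=
    auxS _ i ≪≫ (singleFunctor C i).mapIso ((asIso ((homologyFunctor C i).map f)).symm ≪≫
      asIso ((homologyFunctor C i).map v)) ≪≫ e.symm
  -- cohomology of `Z⟦1⟧`
  have hZiso (j : ℤ) (hj : j + 1 ≤ i - 1) : Nonempty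
      ((homologyFunctor C j).obj (Z⟦(1 : ℤ)⟧) ≅ (homologyFunctor C (j + 1)).obj X) := by
    have h1 := hu (j + 1) hj
    have h2 := hf (j + 1) (by lia)
    let e1 : (homologyFunctor C j).obj (Z⟦(1 : ℤ)⟧) ≅ (homologyFunctor C (j + 1)).obj Z :=
      ((homologyFunctor C 0).shiftIso 1 j (j + 1) (by lia)).app Z
    let e2 := asIso ((homologyFunctor C (j + 1)).map u)
    let e3 := asIso ((homologyFunctor C (j + 1)).map f)
    exact ⟨e1 ≪≫ e2 ≪≫ e3⟩
  have hZ1 : (Z⟦(1 : ℤ)⟧).IsLE (i - 2) := TStructure.t.isLE_shift Z (i - 1) 1 (i - 2) (by lia)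
  have hZ2 : (Z⟦(1 : ℤ)⟧).IsGE (a - 1) := by
    rw [isGE_iff]
    intro j hj
    by_cases hj' : j + 1 ≤ i - 1
    · exact (X.isZero_of_isGE a (j + 1) (by lia)).of_iso (hZiso j hj').some
    · exact (Z⟦(1 : ℤ)⟧).isZero_of_isLE (i - 2) j (by lia)
  have hw : E.hom ≫ w = 0 := by
    have hle : (Z⟦(1 : ℤ)⟧).IsLE ((a - 1) + (i - a).toNat - 1) :=
      TStructure.t.isLE_of_le _ (i - 2) _ (by lia)
    refine aux_vanish _ (a - 1) (i - a).toNat (Z⟦(1 : ℤ)⟧) hZ2 hle ?_ _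
    intro j φ
    by_cases hj' : j + 1 ≤ i - 1
    · let e' := (singleFunctor C j).mapIso (hZiso j hj').some ≪≫ (auxS _ j).symm
      rw [← cancel_mono e'.hom, zero_comp]
      refine aux_shift_zero _ _ i j ((i - j).toNat : ℤ) (by lia) ?_ _
      exact hext i (j + 1) _ (by lia)
    · exact ((singleFunctor C j).map_isZero
        ((Z⟦(1 : ℤ)⟧).isZero_of_isLE (i - 2) j (by lia))).eq_of_tgt _ _
  obtain ⟨s, hs⟩ : ∃ s : _ ⟶ Y, E.hom = s ≫ v := Triangle.coyoneda_exact₃ _ hT E.hom hw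
  refine ⟨s ≫ f, ?_⟩
  have h1 : IsIso ((homologyFunctor C i).map s ≫ (homologyFunctor C i).map v) := by
    rw [← Functor.map_comp, ← hs]
    infer_instance
  have h2 : IsIso ((homologyFunctor C i).map s) := IsIso.of_isIso_comp_right _
    ((homologyFunctor C i).map v)
  rw [Functor.map_comp]
  infer_instance

lemma aux_S_isZero (M : C) (i n : ℤ) (h : n ≠ i) :
    IsZero ((homologyFunctor C n).obj (((singleFunctor C 0).obj M)⟦-i⟧)) := by
  refine IsZero.of_iso ?_ ((homologyFunctor C n).mapIso (auxS M i))
  rcases lt_or_gt_of_ne h with h | h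
  · exact isZero_of_isGE _ i n h
  · exact isZero_of_isLE _ i n h

end Helpers

/-- **Lemma 3.1.** Let `C` be an abelian category and `X` an object of its bounded derived
category (realized as an object of `DerivedCategory C` with bounded cohomology, the bound
being given by `a ≤ b`) such that `Ext^k(H^i(X), H^j(X)) = 0` for all `i, j` and all
`k ≥ 2`, where `Ext^k(M, N) = Hom_{D(C)}(M, N[k])` for `M`, `N` viewed as complexes
concentrated in degree `0`.  Then `X` splits:
`X ≅ ⊕_{i ∈ ℤ} H^i(X)[-i]`, the (finite) sum being indexed by `a ≤ i ≤ b`. -/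
theorem three_cusps_stmt8
    {C : Type*} [Category C] [Abelian C] [HasDerivedCategory C]
    (X : DerivedCategory C) (a b : ℤ)
    (hbound : ∀ i : ℤ, (i < a ∨ b < i) →
      IsZero ((DerivedCategory.homologyFunctor C i).obj X))
    (hext : ∀ (i j : ℤ) (k : ℕ), 2 ≤ k →
      ∀ φ : (DerivedCategory.singleFunctor C 0).obj
              ((DerivedCategory.homologyFunctor C i).obj X) ⟶
            ((DerivedCategory.singleFunctor C 0).obj
              ((DerivedCategory.homologyFunctor C j).obj X))⟦(k : ℤ)⟧,
        φ = 0) :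
    Nonempty (X ≅ ⨁ (fun i : (Finset.Icc a b) =>
      ((DerivedCategory.singleFunctor C 0).obj
        ((DerivedCategory.homologyFunctor C (i : ℤ)).obj X))⟦-(i : ℤ)⟧)) := by
  have ha : X.IsGE a := (DerivedCategory.isGE_iff X a).2 fun i hi ↦ hbound i (Or.inl hi)
  choose g hg using aux_map X a b ha hext
  let S : Finset.Icc a b → DerivedCategory C := fun i =>
      ((DerivedCategory.singleFunctor C 0).obj
        ((DerivedCategory.homologyFunctor C (i : ℤ)).obj X))⟦-(i : ℤ)⟧
  let G : (⨁ S) ⟶ X := biproduct.desc fun i ↦ g i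
  suffices IsIso G from ⟨(asIso G).symm⟩
  have hid : ∑ i, biproduct.π S i ≫ biproduct.ι S i = 𝟙 (⨁ S) := biproduct.total
  rw [DerivedCategory.isIso_iff]
  intro n
  have hidn : ∑ i, (DerivedCategory.homologyFunctor C n).map (biproduct.π S i) ≫
      (DerivedCategory.homologyFunctor C n).map (biproduct.ι S i) = 𝟙 _ := by
    simp only [← Functor.map_comp]
    rw [← Functor.map_sum, hid, CategoryTheory.Functor.map_id]
  by_cases hn : n ∈ Finset.Icc a b
  · rw [Finset.sum_eq_single (⟨n, hn⟩ : Finset.Icc a b)] at hidn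
    · have h1 : IsIso ((DerivedCategory.homologyFunctor C n).map (biproduct.ι S ⟨n, hn⟩)) := by
        refine ⟨_, ?_, hidn⟩
        rw [← Functor.map_comp, biproduct.ι_π_self, CategoryTheory.Functor.map_id]
      have h2 : (DerivedCategory.homologyFunctor C n).map (biproduct.ι S ⟨n, hn⟩) ≫
          (DerivedCategory.homologyFunctor C n).map G =
          (DerivedCategory.homologyFunctor C n).map (g n) := by
        rw [← Functor.map_comp, biproduct.ι_desc]
      have h3 := hg n
      rw [← h2] at h3
      exact IsIso.of_isIso_comp_left
        ((DerivedCategory.homologyFunctor C n).map (biproduct.ι S ⟨n, hn⟩)) _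
    · intro i _ hi
      rw [(aux_S_isZero _ _ n (fun h ↦ hi (Subtype.ext h.symm))).eq_of_tgt
        ((DerivedCategory.homologyFunctor C n).map (biproduct.π S i)) 0, zero_comp]
    · intro h
      exact absurd (Finset.mem_univ _) h
  · have hX : IsZero ((DerivedCategory.homologyFunctor C n).obj X) := by
      apply hbound
      simp only [Finset.mem_Icc] at hn
      lia
    have hS : IsZero ((DerivedCategory.homologyFunctor C n).obj (⨁ S)) := by
      rw [IsZero.iff_id_eq_zero, ← hidn]
      refine Finset.sum_eq_zero fun i _ ↦ ?_
      rw [(aux_S_isZero _ _ n (fun h ↦ hn (h ▸ i.2))).eq_of_tgt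
        ((DerivedCategory.homologyFunctor C n).map (biproduct.π S i)) 0, zero_comp]
    exact ⟨0, hS.eq_of_src _ _, hX.eq_of_src _ _⟩
end
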